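/- arXiv:2506.24067 — 3 statements merged into one kernel-verified Lean document; each statement's English description precedes it below -/
import Mathlib

section
/- Let N, m ≥ 1 be integers and let Ω ⊆ ℝ × ℝ^m be an open set such that for every z ∈ ℝ^m the slice Ω_z := {t ∈ ℝ : (t, z) ∈ Ω}, if nonempty, is an interval containing 0. Let A : Ω → Matrix (Fin N) (Fin N) ℂ be real-analytic on Ω. Suppose W : Ω → Matrix (Fin N) (Fin N) ℂ satisfies: (i) for every (t, z) ∈ Ω the map s ↦ W(s, z) is differentiable at t with derivative −A(t, z) · W(t, z); and (ii) W(0, z) = Id for every z with (0, z) ∈ Ω. Then W is real-analytic on Ω. -/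
open Matrix

attribute [local instance] Matrix.normedAddCommGroup Matrix.normedSpace

/-!
On the segment from time `τ` to time `t` the transport equation becomes the Volterra integral
equation `(1 - V) f = const (W (τ, z))` on continuous maps of the unit interval. The kernel of `V`
is the attenuation along the segment multiplied by `t - τ`, and it depends analytically on
`(τ, t, z)` because an analytic function acts analytically on continuous maps. As `V` vanishes for
`t = τ`, inverting `1 - V` yields `W (t, z) = R (τ, t, z) (W (τ, z))` with `R` analytic near the
diagonal. Hence analyticity in `z` propagates forwards and backwards in time, and it spreads from
the initial time over the whole slice by connectedness.
-/

open Filter Set Topology unitInterval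

section Superposition

/-- The superposition (Nemytskii) operator `u ↦ F ∘ u` on continuous maps, with value `0` at those
`u` for which `F ∘ u` is not continuous. -/
noncomputable def superposition {K X G : Type*} [TopologicalSpace K] [TopologicalSpace X]
    [TopologicalSpace G] [Zero G] (F : X → G) (u : C(K, X)) : C(K, G) :=
  ContinuousMap.mkD (fun s ↦ F (u s)) 0

theorem superposition_apply {K X G : Type*} [TopologicalSpace K] [TopologicalSpace X]
    [TopologicalSpace G] [Zero G] {F : X → G} {u : C(K, X)} (h : Continuous fun s ↦ F (u s))
    (s : K) : superposition F u s = F (u s) :=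
  ContinuousMap.mkD_apply_of_continuous h

variable {𝕜 K X G : Type*} [NontriviallyNormedField 𝕜] [TopologicalSpace K] [CompactSpace K]
  [NormedAddCommGroup X] [NormedSpace 𝕜 X] [NormedAddCommGroup G] [NormedSpace 𝕜 G]

variable (K) in
/-- The multilinear map on continuous maps which applies `p` pointwise; these are the Taylor
coefficients of a superposition operator at a constant map. -/
noncomputable def pointwiseMultilinear {n : ℕ}
    (p : ContinuousMultilinearMap 𝕜 (fun _ : Fin n ↦ X) G) :
    ContinuousMultilinearMap 𝕜 (fun _ : Fin n ↦ C(K, X)) C(K, G) :=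
  MultilinearMap.mkContinuous
    { toFun u := ⟨fun s ↦ p fun i ↦ u i s, by fun_prop⟩
      map_update_add' u i f g := ContinuousMap.ext fun s ↦
        (p.compContinuousLinearMap fun _ ↦ ContinuousMap.evalCLM 𝕜 s).map_update_add u i f g
      map_update_smul' u i c f := ContinuousMap.ext fun s ↦
        (p.compContinuousLinearMap fun _ ↦ ContinuousMap.evalCLM 𝕜 s).map_update_smul u i c f }
    ‖p‖ fun u ↦ by
      refine (ContinuousMap.norm_le _ (by positivity)).2 fun s ↦ (p.le_opNorm _).trans ?_
      gcongr with i
      exact (u i).norm_coe_le_norm s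

theorem norm_pointwiseMultilinear_le {n : ℕ}
    (p : ContinuousMultilinearMap 𝕜 (fun _ : Fin n ↦ X) G) : ‖pointwiseMultilinear K p‖ ≤ ‖p‖ :=
  MultilinearMap.mkContinuous_norm_le _ (norm_nonneg _) _

theorem hasFPowerSeriesOnBall_superposition [CompleteSpace G] {F : X → G}
    {p : FormalMultilinearSeries 𝕜 X G} {x₀ : X} {r : ENNReal}
    (hF : HasFPowerSeriesOnBall F p x₀ r) :
    HasFPowerSeriesOnBall (superposition F) (fun n ↦ pointwiseMultilinear K (p n))
      (ContinuousMap.const K x₀) r := by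
  let P : FormalMultilinearSeries 𝕜 C(K, X) C(K, G) := fun n ↦ pointwiseMultilinear K (p n)
  have hr : r ≤ P.radius := hF.r_le.trans <|
    FormalMultilinearSeries.radius_le_of_le fun n ↦ norm_pointwiseMultilinear_le (p n)
  refine ⟨hr, hF.r_pos, fun {u} hu ↦ ?_⟩
  have hsum : HasSum (fun n ↦ P n fun _ ↦ u) (P.sum u) := P.hasSum (Metric.eball_subset_eball hr hu)
  have hsum_apply (s : K) : P.sum u s = F (x₀ + u s) := by
    have hus : u s ∈ Metric.eball (0 : X) r := by
      rw [mem_eball_zero_iff] at hu ⊢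
      exact (enorm_le_iff_norm_le.2 (u.norm_coe_le_norm s)).trans_lt hu
    exact (hsum.mapL (ContinuousMap.evalCLM 𝕜 s)).unique (hF.hasSum hus)
  have hsuperposition : superposition F (ContinuousMap.const K x₀ + u) = P.sum u := by
    ext s
    refine (superposition_apply ?_ s).trans (hsum_apply s).symm
    exact (P.sum u).continuous.congr hsum_apply
  rwa [hsuperposition]

theorem analyticAt_superposition [CompleteSpace G] {F : X → G} {x₀ : X} (hF : AnalyticAt 𝕜 F x₀) :
    AnalyticAt 𝕜 (superposition F) (ContinuousMap.const K x₀) := by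
  obtain ⟨p, r, hp⟩ := hF
  exact (hasFPowerSeriesOnBall_superposition hp).analyticAt

variable (𝕜 K X G) in
/-- Pointwise application `(B, f) ↦ (s ↦ B s (f s))` of a continuous family of operators to a
continuous map, as a continuous bilinear map. -/
noncomputable def pointwiseApply : C(K, X →L[𝕜] G) →L[𝕜] C(K, X) →L[𝕜] C(K, G) :=
  LinearMap.mkContinuous₂
    (LinearMap.mk₂ 𝕜
      (fun (B : C(K, X →L[𝕜] G)) (f : C(K, X)) ↦ (⟨fun s ↦ B s (f s), by fun_prop⟩ : C(K, G)))
      (fun _ _ _ ↦ rfl) (fun _ _ _ ↦ rfl)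
      (fun B _ _ ↦ ContinuousMap.ext fun s ↦ map_add (B s) _ _)
      (fun _ B _ ↦ ContinuousMap.ext fun s ↦ map_smul (B s) _ _))
    1 fun B f ↦ by
      refine (ContinuousMap.norm_le _ (by positivity)).2 fun s ↦ ?_
      rw [one_mul]
      exact (B s).le_of_opNorm_le_of_le (B.norm_coe_le_norm s) (f.norm_coe_le_norm s)

end Superposition

section Volterra

theorem continuous_comp_projIcc {E : Type*} [TopologicalSpace E] (f : C(I, E)) :
    Continuous fun r ↦ f (projIcc 0 1 zero_le_one r) :=
  f.continuous.comp continuous_projIcc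

variable {E : Type*} [NormedAddCommGroup E] [NormedSpace ℝ E]

variable (E) in
/-- The integral `f ↦ (s ↦ ∫ r in 0..s, f r)` from `0`, as an operator on continuous maps. The
integrand is extended constantly outside the unit interval. -/
noncomputable def primitive : C(I, E) →L[ℝ] C(I, E) :=
  LinearMap.mkContinuous
    { toFun f := ⟨fun s ↦ ∫ r in (0 : ℝ)..s, f (projIcc 0 1 zero_le_one r),
        (intervalIntegral.continuous_primitive
          (fun _ _ ↦ (continuous_comp_projIcc f).intervalIntegrable _ _) 0).comp
          continuous_subtype_val⟩
      map_add' f g := ContinuousMap.ext fun _ ↦ intervalIntegral.integral_add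
        ((continuous_comp_projIcc f).intervalIntegrable _ _)
        ((continuous_comp_projIcc g).intervalIntegrable _ _)
      map_smul' c _ := ContinuousMap.ext fun _ ↦ intervalIntegral.integral_smul c _ }
    1 fun f ↦ by
      refine (ContinuousMap.norm_le _ (by positivity)).2 fun s ↦ ?_
      calc ‖∫ r in (0 : ℝ)..s, f (projIcc 0 1 zero_le_one r)‖
          ≤ ‖f‖ * |(s : ℝ) - 0| :=
            intervalIntegral.norm_integral_le_of_norm_le_const fun _ _ ↦ f.norm_coe_le_norm _
        _ ≤ 1 * ‖f‖ := by
            rw [sub_zero, abs_of_nonneg s.2.1, mul_comm]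
            gcongr
            exact s.2.2

theorem primitive_apply_eq_sub [CompleteSpace E] {f : ℝ → E} {g : C(I, E)}
    (h : ∀ s : I, HasDerivWithinAt f (g s) I s) (s : I) : primitive E g s = f s - f 0 := by
  refine intervalIntegral.integral_eq_sub_of_hasDerivAt_of_le s.2.1 (fun r hr ↦ ?_)
    (fun r hr ↦ ?_) ((continuous_comp_projIcc g).intervalIntegrable _ _)
  · exact (h ⟨r, hr.1, hr.2.trans s.2.2⟩).continuousWithinAt.mono (Icc_subset_Icc_right s.2.2)
  · have hr₁ : r < 1 := hr.2.trans_le s.2.2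
    rw [projIcc_of_mem zero_le_one ⟨hr.1.le, hr₁.le⟩]
    exact (h ⟨r, hr.1.le, hr₁.le⟩).hasDerivAt (Icc_mem_nhds hr.1 hr₁)

variable (E) in
/-- The Volterra operator `f ↦ (s ↦ ∫ r in 0..s, B r (f r))` with kernel `B`, as a function
of `B`. -/
noncomputable def volterra : C(I, E →L[ℝ] E) →L[ℝ] C(I, E) →L[ℝ] C(I, E) :=
  (ContinuousLinearMap.compL ℝ C(I, E) C(I, E) C(I, E) (primitive E)).comp (pointwiseApply ℝ I E E)

/-- The operator which takes the value at `0` of a solution of `f' = B f` on the unit interval to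
its value at `1`. It is meaningful if `1 - volterra E B` is invertible, in particular for small
`B`. -/
noncomputable def propagator (B : C(I, E →L[ℝ] E)) : E →L[ℝ] E :=
  (ContinuousMap.evalCLM ℝ (1 : I)).comp
    ((Ring.inverse (1 - volterra E B)).comp (ContinuousLinearMap.const ℝ I))

theorem propagator_apply_of_hasDerivWithinAt [CompleteSpace E] {B : C(I, E →L[ℝ] E)}
    (hB : IsUnit (1 - volterra E B)) {f : ℝ → E}
    (hf : ∀ s : I, HasDerivWithinAt f (B s (f s)) I s) : propagator B (f 0) = f 1 := by
  let φ : C(I, E) := ⟨fun s ↦ f s, continuous_iff_continuousAt.2 fun s ↦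
    (hf s).continuousWithinAt.tendsto.comp (tendsto_nhdsWithin_iff.2
      ⟨continuousAt_subtype_val, Eventually.of_forall Subtype.coe_prop⟩)⟩
  have integral_equation : (1 - volterra E B) φ = ContinuousLinearMap.const ℝ I (f 0) := by
    ext s
    have hs : volterra E B φ s = f s - f 0 :=
      primitive_apply_eq_sub (f := f) (g := pointwiseApply ℝ I E E B φ) hf s
    change φ s - volterra E B φ s = f 0
    rw [hs]
    exact sub_sub_cancel (f s) (f 0)
  have solution : Ring.inverse (1 - volterra E B) (ContinuousLinearMap.const ℝ I (f 0)) = φ := by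
    rw [← integral_equation]
    exact DFunLike.congr_fun (Ring.inverse_mul_cancel _ hB) φ
  exact DFunLike.congr_fun solution 1

theorem analyticAt_propagator_zero [CompleteSpace E] :
    AnalyticAt ℝ (propagator (E := E)) 0 := by
  have hvolterra : AnalyticAt ℝ (volterra E) 0 :=
    ContinuousLinearMap.analyticAt (𝕜 := ℝ) (E := C(I, E →L[ℝ] E)) (F := C(I, E) →L[ℝ] C(I, E))
      (volterra E) 0
  have hinv : AnalyticAt ℝ (fun B ↦ Ring.inverse (1 - volterra E B)) 0 :=
    (analyticAt_inverse_one_sub ℝ (C(I, E) →L[ℝ] C(I, E))).fun_comp_of_eq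
      (f := volterra E) (g := fun T ↦ Ring.inverse (1 - T)) hvolterra (map_zero (volterra E))
  let compress : (C(I, E) →L[ℝ] C(I, E)) →L[ℝ] E →L[ℝ] E :=
    (ContinuousLinearMap.compL ℝ E C(I, E) E (ContinuousMap.evalCLM ℝ 1)).comp
      ((ContinuousLinearMap.compL ℝ E C(I, E) C(I, E)).flip (ContinuousLinearMap.const ℝ I))
  exact (compress.analyticAt _).comp hinv

theorem eventually_isUnit_one_sub_volterra [CompleteSpace E] :
    ∀ᶠ B in 𝓝 (0 : C(I, E →L[ℝ] E)), IsUnit (1 - volterra E B) := by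
  have hcont : ContinuousAt (fun B ↦ 1 - volterra E B) 0 := by fun_prop
  refine hcont.preimage_mem_nhds ((Units.isOpen (R := C(I, E) →L[ℝ] C(I, E))).mem_nhds ?_)
  simp only [map_zero, sub_zero, mem_ofPred_eq, isUnit_one]

end Volterra

section Transport

section Segment

variable {E Z : Type*} [NormedAddCommGroup E] [NormedSpace ℝ E] [TopologicalSpace Z]

/-- For `y = (τ, t, z)`, the segment from `(τ, z)` to `(t, z)`, parametrized by the unit
interval. -/
noncomputable def timeSegment (y : ℝ × ℝ × Z) : C(I, ℝ × Z) :=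
  ⟨fun s ↦ (AffineMap.lineMap y.1 y.2.1 (s : ℝ), y.2.2), by fun_prop⟩

theorem timeSegment_diagonal (t : ℝ) (z : Z) :
    timeSegment (t, t, z) = ContinuousMap.const I (t, z) := by
  ext s <;> simp [timeSegment]

theorem eventually_forall_timeSegment {p : ℝ × Z → Prop} {t : ℝ} {z : Z}
    (hp : ∀ᶠ x in 𝓝 (t, z), p x) : ∀ᶠ y in 𝓝 (t, t, z), ∀ s : I, p (timeSegment y s) := by
  have hcont : Continuous fun q : (ℝ × ℝ × Z) × I ↦ timeSegment q.1 q.2 := by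
    simp only [timeSegment, ContinuousMap.coe_mk, AffineMap.lineMap_apply]
    fun_prop
  have hforall := isCompact_univ.eventually_forall_of_forall_eventually
    (x₀ := (t, t, z)) (P := fun y s ↦ p (timeSegment y s)) (K := univ) fun s _ ↦
      (hcont.tendsto' (_, s) (t, z) (by simp [timeSegment_diagonal])).eventually hp
  filter_upwards [hforall] with y hy s using hy s (mem_univ s)

/-- The coefficient of the equation `W' = A W` on the segment `timeSegment (τ, t, z)`, rescaled to
the unit interval. -/
noncomputable def segmentCoefficient (A : ℝ × Z → E →L[ℝ] E) (y : ℝ × ℝ × Z) : C(I, E →L[ℝ] E) :=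
  (y.2.1 - y.1) • superposition A (timeSegment y)

theorem segmentCoefficient_diagonal (A : ℝ × Z → E →L[ℝ] E) (t : ℝ) (z : Z) :
    segmentCoefficient A (t, t, z) = 0 := by
  rw [segmentCoefficient, sub_self]
  exact zero_smul ℝ (superposition A (timeSegment (t, t, z)))

end Segment

variable {E Z : Type*} [NormedAddCommGroup E] [NormedSpace ℝ E]
  [NormedAddCommGroup Z] [NormedSpace ℝ Z]

theorem analyticAt_snd_fst_sub_fst (y : ℝ × ℝ × Z) :
    AnalyticAt ℝ (fun y : ℝ × ℝ × Z ↦ y.2.1 - y.1) y :=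
  (analyticAt_fst.fun_comp analyticAt_snd).sub analyticAt_fst

theorem analyticAt_timeSegment (y : ℝ × ℝ × Z) : AnalyticAt ℝ timeSegment y := by
  let c : C(I, ℝ × Z) := ⟨fun s ↦ (s, 0), by fun_prop⟩
  have h : timeSegment = fun y : ℝ × ℝ × Z ↦
      (y.2.1 - y.1) • c + ContinuousLinearMap.const ℝ I (y.1, y.2.2) := by
    ext y s <;> simp [timeSegment, c, AffineMap.lineMap_apply, mul_comm]
  rw [h]
  have hstart : AnalyticAt ℝ (fun y : ℝ × ℝ × Z ↦ (y.1, y.2.2)) y :=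
    analyticAt_fst.prod (analyticAt_snd.fun_comp analyticAt_snd)
  exact ((analyticAt_snd_fst_sub_fst y).smul analyticAt_const).add
    (((ContinuousLinearMap.const ℝ I).analyticAt _).fun_comp hstart)

variable [CompleteSpace E] {A : ℝ × Z → E →L[ℝ] E} {W : ℝ × Z → E} {t₁ : ℝ} {z₀ : Z}

theorem analyticAt_segmentCoefficient (hA : AnalyticAt ℝ A (t₁, z₀)) :
    AnalyticAt ℝ (segmentCoefficient A) (t₁, t₁, z₀) := by
  have hsuperposition : AnalyticAt ℝ (fun y ↦ superposition A (timeSegment y)) (t₁, t₁, z₀) :=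
    (analyticAt_superposition hA).comp_of_eq (analyticAt_timeSegment _) (timeSegment_diagonal t₁ z₀)
  exact (analyticAt_snd_fst_sub_fst _).fun_smul hsuperposition

theorem analyticAt_propagator_segmentCoefficient (hA : AnalyticAt ℝ A (t₁, z₀)) :
    AnalyticAt ℝ (fun y ↦ propagator (segmentCoefficient A y)) (t₁, t₁, z₀) :=
  analyticAt_propagator_zero.comp_of_eq (analyticAt_segmentCoefficient hA)
    (segmentCoefficient_diagonal A t₁ z₀)

theorem eventually_propagator_segmentCoefficient_apply (hA : AnalyticAt ℝ A (t₁, z₀))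
    (hW : ∀ᶠ x in 𝓝 (t₁, z₀), HasDerivAt (fun s ↦ W (s, x.2)) (A x (W x)) x.1) :
    ∀ᶠ y in 𝓝 (t₁, t₁, z₀),
      propagator (segmentCoefficient A y) (W (y.1, y.2.2)) = W (y.2.1, y.2.2) := by
  have hunit : ∀ᶠ y in 𝓝 (t₁, t₁, z₀), IsUnit (1 - volterra E (segmentCoefficient A y)) := by
    refine (analyticAt_segmentCoefficient hA).continuousAt.eventually
      (p := fun B ↦ IsUnit (1 - volterra E B)) ?_
    rw [segmentCoefficient_diagonal]
    exact eventually_isUnit_one_sub_volterra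
  have hcont := hA.eventually_analyticAt.mono fun _ h ↦ h.continuousAt
  filter_upwards [hunit, eventually_forall_timeSegment hcont, eventually_forall_timeSegment hW]
    with y hy hAy hWy
  have hcoeff (s : I) : segmentCoefficient A y s = (y.2.1 - y.1) • A (timeSegment y s) :=
    congrArg ((y.2.1 - y.1) • ·) <| superposition_apply
      (continuous_iff_continuousAt.2 fun s ↦ (hAy s).comp ((timeSegment y).continuousAt s)) s
  have hderiv (s : I) : HasDerivAt (fun s : ℝ ↦ W (AffineMap.lineMap y.1 y.2.1 s, y.2.2))
      (segmentCoefficient A y s (W (timeSegment y s))) s := by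
    rw [hcoeff]
    have hline : HasDerivAt (AffineMap.lineMap y.1 y.2.1 : ℝ → ℝ) (y.2.1 - y.1) s :=
      AffineMap.hasDerivAt_lineMap
    exact HasDerivAt.scomp (s : ℝ) (hWy s) hline
  simpa only [AffineMap.lineMap_apply_zero, AffineMap.lineMap_apply_one] using
    propagator_apply_of_hasDerivWithinAt hy fun s ↦ (hderiv s).hasDerivWithinAt

theorem eventually_analyticAt_of_analyticAt_slice (hA : AnalyticAt ℝ A (t₁, z₀))
    (hW : ∀ᶠ x in 𝓝 (t₁, z₀), HasDerivAt (fun s ↦ W (s, x.2)) (A x (W x)) x.1) :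
    ∀ᶠ q : ℝ × ℝ in 𝓝 (t₁, t₁),
      AnalyticAt ℝ (fun z ↦ W (q.1, z)) z₀ → AnalyticAt ℝ W (q.2, z₀) := by
  have hprop := (analyticAt_propagator_segmentCoefficient hA).eventually_analyticAt.and
    (eventually_propagator_segmentCoefficient_apply hA hW).eventually_nhds
  have hdiag : Continuous fun q : ℝ × ℝ ↦ (q.1, q.2, z₀) := by fun_prop
  filter_upwards [(hdiag.tendsto (t₁, t₁)).eventually hprop] with q ⟨hR, hRW⟩ hslice
  have hcont : Continuous fun x : ℝ × Z ↦ (q.1, x.1, x.2) := by fun_prop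
  refine AnalyticAt.congr ?_ ((hcont.tendsto (q.2, z₀)).eventually hRW)
  have hRx : AnalyticAt ℝ
      (fun x : ℝ × Z ↦ propagator (segmentCoefficient A (q.1, x.1, x.2))) (q.2, z₀) :=
    hR.fun_comp (g := fun y ↦ propagator (segmentCoefficient A y))
      (f := fun x : ℝ × Z ↦ (q.1, x.1, x.2))
      (analyticAt_const.prod (analyticAt_fst.prod analyticAt_snd))
  have hWx : AnalyticAt ℝ (fun x : ℝ × Z ↦ W (q.1, x.2)) (q.2, z₀) :=
    hslice.fun_comp (g := fun z ↦ W (q.1, z)) (f := fun x : ℝ × Z ↦ x.2) analyticAt_snd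
  exact ((ContinuousLinearMap.id ℝ (E →L[ℝ] E)).analyticAt_bilinear _).comp₂ hRx hWx

theorem analyticAt_of_isPreconnected_slice {S : Set ℝ} (hS : IsPreconnected S)
    (hA : ∀ t ∈ S, AnalyticAt ℝ A (t, z₀))
    (hW : ∀ t ∈ S, ∀ᶠ x in 𝓝 (t, z₀), HasDerivAt (fun s ↦ W (s, x.2)) (A x (W x)) x.1)
    {t₀ t : ℝ} (ht₀ : t₀ ∈ S) (ht : t ∈ S) (hW₀ : AnalyticAt ℝ (fun z ↦ W (t₀, z)) z₀) :
    AnalyticAt ℝ W (t, z₀) := by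
  let SliceAnalytic (a : ℝ) : Prop := AnalyticAt ℝ (fun z ↦ W (a, z)) z₀
  have slice_of_joint {a : ℝ} (ha : AnalyticAt ℝ W (a, z₀)) : SliceAnalytic a :=
    ha.fun_comp (f := fun z ↦ (a, z)) (by fun_prop)
  have step (a : ℝ) (ha : a ∈ S) := eventually_analyticAt_of_analyticAt_slice (hA a ha) (hW a ha)
  have eventually_iff (a : ℝ) (ha : a ∈ S) :
      ∀ᶠ b in 𝓝[S] a, (SliceAnalytic a ↔ SliceAnalytic b) := by
    have hforward : Continuous fun b : ℝ ↦ (a, b) := by fun_prop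
    have hbackward : Continuous fun b : ℝ ↦ (b, a) := by fun_prop
    filter_upwards [nhdsWithin_le_nhds ((hforward.tendsto a).eventually (step a ha)),
      nhdsWithin_le_nhds ((hbackward.tendsto a).eventually (step a ha))] with b hab hba
    exact ⟨slice_of_joint ∘ hab, slice_of_joint ∘ hba⟩
  have iff_slice : SliceAnalytic t₀ ↔ SliceAnalytic t :=
    hS.induction₂ (fun a b ↦ SliceAnalytic a ↔ SliceAnalytic b) eventually_iff
      (fun _ _ _ _ _ _ ↦ Iff.trans) (fun _ _ _ _ ↦ Iff.symm) ht₀ ht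
  exact (step t ht).self_of_nhds (iff_slice.1 hW₀)

theorem transport_fundamental_solution_analytic_general {Ω : Set (ℝ × Z)} (hΩ : IsOpen Ω)
    (hslice : ∀ z : Z, {t : ℝ | (t, z) ∈ Ω}.Nonempty →
      (0, z) ∈ Ω ∧ Set.OrdConnected {t : ℝ | (t, z) ∈ Ω})
    (hA : AnalyticOnNhd ℝ A Ω)
    (hW : ∀ x ∈ Ω, HasDerivAt (fun s ↦ W (s, x.2)) (A x (W x)) x.1)
    (hW₀ : AnalyticOnNhd ℝ (fun z ↦ W (0, z)) {z | (0, z) ∈ Ω}) :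
    AnalyticOnNhd ℝ W Ω := by
  rintro ⟨t, z⟩ htz
  obtain ⟨h0, hconn⟩ := hslice z ⟨t, htz⟩
  exact analyticAt_of_isPreconnected_slice hconn.isPreconnected (fun s hs ↦ hA (s, z) hs)
    (fun s hs ↦ eventually_of_mem (hΩ.mem_nhds hs) hW) h0 htz (hW₀ z h0)

end Transport

theorem analyticOnNhd_toContinuousBilinearMap {𝕜 V F G H : Type*} [NontriviallyNormedField 𝕜]
    [CompleteSpace 𝕜] [NormedAddCommGroup V] [NormedSpace 𝕜 V] [NormedAddCommGroup F]
    [NormedSpace 𝕜 F] [FiniteDimensional 𝕜 F] [NormedAddCommGroup G] [NormedSpace 𝕜 G]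
    [FiniteDimensional 𝕜 G] [NormedAddCommGroup H] [NormedSpace 𝕜 H] (b : F →ₗ[𝕜] G →ₗ[𝕜] H)
    {A : V → F} {s : Set V} (hA : AnalyticOnNhd 𝕜 A s) :
    AnalyticOnNhd 𝕜 (fun x ↦ b.toContinuousBilinearMap (A x)) s :=
  b.toContinuousBilinearMap.comp_analyticOnNhd hA

/-- The fundamental solution of a linear transport equation whose matrix attenuation
depends real-analytically on time and parameters is itself real-analytic jointly in time
and parameters (local-coordinate content of Lemma 4.2 of the paper). The open set
`Ω ⊆ ℝ × ℝ^m` has slices `Ω_z` that, if nonempty, are intervals containing `0`. -/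
theorem transport_fundamental_solution_analytic
    (N m : ℕ) (hN : 1 ≤ N) (hm : 1 ≤ m)
    (Ω : Set (ℝ × (Fin m → ℝ))) (hΩ : IsOpen Ω)
    (hslice : ∀ z : Fin m → ℝ, {t : ℝ | (t, z) ∈ Ω}.Nonempty →
      (0, z) ∈ Ω ∧ Set.OrdConnected {t : ℝ | (t, z) ∈ Ω})
    (A W : ℝ × (Fin m → ℝ) → Matrix (Fin N) (Fin N) ℂ)
    (hA : AnalyticOnNhd ℝ A Ω)
    (hW : ∀ tz : ℝ × (Fin m → ℝ), tz ∈ Ω →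
      HasDerivAt (fun s : ℝ => W (s, tz.2)) (-(A tz * W tz)) tz.1)
    (hW0 : ∀ z : Fin m → ℝ, (0, z) ∈ Ω → W (0, z) = 1) :
    AnalyticOnNhd ℝ W Ω := by
  have hΩ₀ : IsOpen {z | (0, z) ∈ Ω} := hΩ.preimage (by fun_prop)
  have hW₀ : AnalyticOnNhd ℝ (fun z ↦ W (0, z)) {z | (0, z) ∈ Ω} :=
    analyticOnNhd_const.congr hΩ₀ fun z hz ↦ (hW0 z hz).symm
  have hmul := analyticOnNhd_toContinuousBilinearMap
    (-LinearMap.mul ℝ (Matrix (Fin N) (Fin N) ℂ)) hA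
  exact transport_fundamental_solution_analytic_general hΩ hslice hmul hW hW₀
end

section
/- Assume there are constants L, M ≥ 0 such that S_∞[a](t, z) ≤ L for all (t, z) ∈ [0, T] × V and S_∞[w](0, z) ≤ M for all z ∈ V. Then for every ν ∈ ℕ and every (t, z) ∈ [0, T] × V one has S_ν[w](t, z) ≤ M · e^{L t}; consequently the full series satisfies S_∞[w](t, z) ≤ M · e^{L t} for all (t, z) ∈ [0, T] × V. -/
open Matrix

attribute [local instance] Matrix.normedAddCommGroup Matrix.normedSpace

/-- Partial derivative in the time variable `t` of a function on `ℝ × ℝ^m`. -/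
noncomputable def pdt {m : ℕ} (f : ℝ × (Fin m → ℝ) → ℂ) : ℝ × (Fin m → ℝ) → ℂ :=
  fun x => deriv (fun s : ℝ => f (s, x.2)) x.1

/-- Partial derivative in the `i`-th parameter variable `z_i` of a function on
`ℝ × ℝ^m`. -/
noncomputable def pdz {m : ℕ} (i : Fin m) (f : ℝ × (Fin m → ℝ) → ℂ) :
    ℝ × (Fin m → ℝ) → ℂ :=
  fun x => deriv (fun s : ℝ => f (x.1, Function.update x.2 i s)) (x.2 i)

/-- The mixed partial derivative `∂_t^p ∂_z^α f` for a multi-index `α : Fin m → ℕ`. -/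
noncomputable def mixedPartial {m : ℕ} (p : ℕ) (α : Fin m → ℕ)
    (f : ℝ × (Fin m → ℝ) → ℂ) : ℝ × (Fin m → ℝ) → ℂ :=
  pdt^[p] (((List.finRange m).foldr (fun i g => (pdz i)^[α i] ∘ g) id) f)

/-- The weighted Taylor-coefficient sum
`S_ν[u](t, z) = ∑_{p + |α| ≤ ν} (ρ^{p+|α|} / (p! α!)) ∑_{i,j} |∂_t^p ∂_z^α u_{ij}(t, z)|`
of a matrix-valued function `u` on `ℝ × ℝ^m`, truncated at total order `ν`. -/
noncomputable def taylorMajorant {m N : ℕ} (ρ : ℝ) (ν : ℕ)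
    (u : ℝ × (Fin m → ℝ) → Matrix (Fin N) (Fin N) ℂ) (x : ℝ × (Fin m → ℝ)) : ℝ :=
  ∑ p ∈ Finset.range (ν + 1), ∑ k ∈ Finset.range (ν + 1 - p),
    ∑ α ∈ Finset.Nat.antidiagonalTuple m k,
      (ρ ^ (p + k) / ((Nat.factorial p : ℝ) * ∏ i, ((Nat.factorial (α i)) : ℝ))) *
        ∑ i : Fin N, ∑ j : Fin N, ‖mixedPartial p α (fun y => u y i j) x‖

/-!
Index the Taylor coefficients of order `k` by words of length `k` in the coordinate directions; a
multi-index `β` with `|β| = k` comes from `k! / β!` words. Writing `g_k` for the order-`k` part of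
the majorant, this gives `(k + 1) g_{k+1}(f) = ρ ∑ᵢ g_k(∂ᵢ f)`, and the product rule yields by
induction on `k` the Cauchy product bound `g_k(f h) ≤ ∑_{p+q=k} g_p(f) g_q(h)`, hence
`S_ν[a w] ≤ S_ν[a] S_ν[w]`. Since `∂_t` commutes with the other derivatives, the vector of all
weighted derivatives of `w` of order at most `ν` along `t ↦ (t, z)` has `ℓ¹` norm `S_ν[w]` and its
`t`-derivative has `ℓ¹` norm `S_ν[∂_t w] = S_ν[a w] ≤ L S_ν[w]`, so Grönwall's inequality applies.
-/

open Filter Topology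
open Finset.HasAntidiagonal (antidiagonal)
open scoped Nat ContDiff

section Gronwall

open Set

variable {F : Type*} [NormedAddCommGroup F] [NormedSpace ℝ F] {L a b t : ℝ}

theorem norm_le_mul_exp_of_norm_deriv_le {f f' : ℝ → F}
    (hf : ContinuousOn f (Icc a b)) (hf' : ∀ s ∈ Ioo a b, HasDerivAt f (f' s) s)
    (hbound : ∀ s ∈ Ioo a b, ‖f' s‖ ≤ L * ‖f s‖) (ht : t ∈ Icc a b) :
    ‖f t‖ ≤ ‖f a‖ * Real.exp (L * (t - a)) := by
  obtain rfl | hat := ht.1.eq_or_lt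
  · simp
  have from_interior : ∀ s ∈ Ioo a t, ‖f t‖ ≤ ‖f s‖ * Real.exp (L * (t - s)) := by
    intro s hs
    have hsub : Ico s t ⊆ Ioo a b := fun r hr => ⟨hs.1.trans_le hr.1, hr.2.trans_le ht.2⟩
    have h := norm_le_gronwallBound_of_norm_deriv_right_le (ε := 0)
      (hf.mono (Icc_subset_Icc hs.1.le ht.2))
      (fun r hr => (hf' r (hsub hr)).hasDerivWithinAt) le_rfl
      (fun r hr => by simpa only [add_zero] using hbound r (hsub hr)) t (right_mem_Icc.2 hs.2.le)
    rwa [gronwallBound_ε0] at h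
  have hlim : Tendsto (fun s => ‖f s‖ * Real.exp (L * (t - s))) (𝓝[Ioo a t] a)
      (𝓝 (‖f a‖ * Real.exp (L * (t - a)))) := by
    have hfa : ContinuousWithinAt f (Ioo a t) a :=
      (hf a (left_mem_Icc.2 (ht.1.trans ht.2))).mono fun s hs => ⟨hs.1.le, hs.2.le.trans ht.2⟩
    exact (hfa.norm.mul (by fun_prop)).tendsto
  have : (𝓝[Ioo a t] a).NeBot := left_nhdsWithin_Ioo_neBot hat
  exact ge_of_tendsto hlim (eventually_mem_nhdsWithin.mono from_interior)

theorem sum_norm_le_mul_exp_of_sum_norm_deriv_le {ι : Type*} [Fintype ι] {f f' : ι → ℝ → F}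
    (hf : ∀ i, ContinuousOn (f i) (Icc a b))
    (hf' : ∀ i, ∀ s ∈ Ioo a b, HasDerivAt (f i) (f' i s) s)
    (hbound : ∀ s ∈ Ioo a b, ∑ i, ‖f' i s‖ ≤ L * ∑ i, ‖f i s‖) (ht : t ∈ Icc a b) :
    ∑ i, ‖f i t‖ ≤ (∑ i, ‖f i a‖) * Real.exp (L * (t - a)) := by
  let toL1 := (PiLp.continuousLinearEquiv 1 ℝ fun _ : ι => F).symm
  have norm_toL1 (g : ι → F) : ‖toL1 g‖ = ∑ i, ‖g i‖ := PiLp.norm_eq_of_L1 _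
  simp only [← norm_toL1] at hbound ⊢
  exact norm_le_mul_exp_of_norm_deriv_le (f := fun s => toL1 fun i => f i s)
    (toL1.continuous.comp_continuousOn (continuousOn_pi.2 hf))
    (fun s hs => toL1.hasFDerivAt.comp_hasDerivAt s (hasDerivAt_pi.2 fun i => hf' i s hs))
    hbound ht

end Gronwall

section IteratedDirDeriv

variable {E F : Type*} [NormedAddCommGroup E] [NormedSpace ℝ E]
  [NormedAddCommGroup F] [NormedSpace ℝ F] {f g : E → F} {x : E} {l l' : List E}

/-- The iterated directional derivative `∂_{v₁} ⋯ ∂_{vₖ} f` along the list `[v₁, …, vₖ]`; the last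
direction is the first to be differentiated. -/
noncomputable def iteratedDirDeriv (l : List E) (f : E → F) : E → F :=
  l.foldr (fun v g x => fderiv ℝ g x v) f

theorem iteratedDirDeriv_cons (v : E) (l : List E) (f : E → F) (x : E) :
    iteratedDirDeriv (v :: l) f x = fderiv ℝ (iteratedDirDeriv l f) x v :=
  rfl

theorem iteratedDirDeriv_append (l l' : List E) (f : E → F) :
    iteratedDirDeriv (l ++ l') f = iteratedDirDeriv l (iteratedDirDeriv l' f) :=
  List.foldr_append

theorem eventually_contDiffAt {n : ℕ} (hf : ContDiffAt ℝ n f x) :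
    ∀ᶠ y in 𝓝 x, ContDiffAt ℝ n f y :=
  hf.eventually (by simp)

theorem contDiffAt_fderiv_apply {n : ℕ∞ω} (hf : ContDiffAt ℝ (n + 1) f x) (v : E) :
    ContDiffAt ℝ n (fun y => fderiv ℝ f y v) x :=
  hf.fderiv_right_succ.clm_apply contDiffAt_const

theorem contDiffAt_iteratedDirDeriv {n : ℕ∞ω} :
    ∀ {l : List E}, ContDiffAt ℝ (n + l.length) f x → ContDiffAt ℝ n (iteratedDirDeriv l f) x
  | [], hf => by simpa [iteratedDirDeriv] using hf
  | v :: l, hf => contDiffAt_fderiv_apply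
      (contDiffAt_iteratedDirDeriv (by
        simpa [add_assoc, add_comm (1 : ℕ∞ω)] using hf)) v

theorem iteratedDirDeriv_congr (h : f =ᶠ[𝓝 x] g) (l : List E) :
    iteratedDirDeriv l f =ᶠ[𝓝 x] iteratedDirDeriv l g := by
  induction l with
  | nil => exact h
  | cons v l ih => exact ih.fderiv.fun_comp (· v)

theorem iteratedDirDeriv_const_smul (c : ℝ) (l : List E) (f : E → F) :
    iteratedDirDeriv l (c • f) = c • iteratedDirDeriv l f := by
  induction l with
  | nil => rfl
  | cons v l ih => ext x; simp [iteratedDirDeriv_cons, ih, fderiv_const_smul_field]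

theorem iteratedDirDeriv_add (hf : ContDiffAt ℝ l.length f x) (hg : ContDiffAt ℝ l.length g x) :
    iteratedDirDeriv l (f + g) =ᶠ[𝓝 x] iteratedDirDeriv l f + iteratedDirDeriv l g := by
  induction l with
  | nil => rfl
  | cons v l ih =>
    have ih := ih (hf.of_le (by simp)) (hg.of_le (by simp))
    filter_upwards [ih.eventuallyEq_nhds, eventually_contDiffAt hf, eventually_contDiffAt hg]
      with y hy hfy hgy
    have differentiableAt {h : E → F} (hh : ContDiffAt ℝ (v :: l).length h y) :
        DifferentiableAt ℝ (iteratedDirDeriv l h) y :=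
      (contDiffAt_iteratedDirDeriv (by simpa [add_comm] using hh)).differentiableAt_one
    simp [iteratedDirDeriv_cons, hy.fderiv_eq,
      fderiv_add (differentiableAt hfy) (differentiableAt hgy)]

theorem fderiv_fderiv_apply_comm (hf : ContDiffAt ℝ 2 f x) (u v : E) :
    fderiv ℝ (fun y => fderiv ℝ f y u) x v = fderiv ℝ (fun y => fderiv ℝ f y v) x u := by
  have hf' : DifferentiableAt ℝ (fderiv ℝ f) x :=
    (hf.fderiv_right (m := 1) (by norm_num)).differentiableAt_one
  have hsymm := (hf.isSymmSndFDerivAt (by simp)).eq u v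
  simpa [fderiv_clm_apply hf' (differentiableAt_const _)] using hsymm.symm

theorem iteratedDirDeriv_perm (h : l.Perm l') (hf : ContDiffAt ℝ l.length f x) :
    iteratedDirDeriv l f =ᶠ[𝓝 x] iteratedDirDeriv l' f := by
  induction h with
  | nil => rfl
  | cons v _ ih => exact (ih (hf.of_le (by simp))).fderiv.fun_comp (· v)
  | swap u v l =>
    filter_upwards [eventually_contDiffAt hf] with y hy
    exact fderiv_fderiv_apply_comm
      (contDiffAt_iteratedDirDeriv (by
        simpa [add_comm, add_left_comm, one_add_one_eq_two] using hy)) _ _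
  | trans h _ ih ih' => exact (ih hf).trans (ih' (h.length_eq ▸ hf))

theorem iteratedDirDeriv_fderiv_apply (hf : ContDiffAt ℝ (l.length + 1) f x) (v : E) :
    iteratedDirDeriv l (fun y => fderiv ℝ f y v) x = fderiv ℝ (iteratedDirDeriv l f) x v := by
  have h := iteratedDirDeriv_perm (f := f) (x := x) (List.perm_append_singleton v l)
    (by simpa using hf)
  rw [iteratedDirDeriv_append] at h
  exact h.eq_of_nhds

end IteratedDirDeriv

section TaylorSum

variable {ι E F : Type*} [Fintype ι] [NormedAddCommGroup E] [NormedSpace ℝ E]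
  [NormedAddCommGroup F] [NormedSpace ℝ F] {ρ : ℝ} {v : ι → E} {f g : E → F} {x : E}

/-- The order-`k` term `(ρ ^ k / k!) ∑_σ ‖∂_{v (σ 0)} ⋯ ∂_{v (σ (k - 1))} f x‖` of the Taylor
majorant of `f` at `x` in the directions `v`. Summing over words `σ` rather than over multi-indices
makes the term recursive in `k`, see `taylorTerm_succ`. -/
noncomputable def taylorTerm (ρ : ℝ) (v : ι → E) (k : ℕ) (f : E → F) (x : E) : ℝ :=
  ρ ^ k / k ! * ∑ σ : Fin k → ι, ‖iteratedDirDeriv (List.ofFn (v ∘ σ)) f x‖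

theorem taylorTerm_nonneg (hρ : 0 ≤ ρ) (k : ℕ) (f : E → F) : 0 ≤ taylorTerm ρ v k f x := by
  unfold taylorTerm
  positivity

theorem taylorTerm_zero : taylorTerm ρ v 0 f x = ‖f x‖ := by
  simp [taylorTerm, iteratedDirDeriv]

theorem taylorTerm_succ (k : ℕ) :
    (k + 1) * taylorTerm ρ v (k + 1) f x =
      ρ * ∑ i, taylorTerm ρ v k (fun y => fderiv ℝ f y (v i)) x := by
  have snoc (i : ι) (σ : Fin k → ι) :
      iteratedDirDeriv (List.ofFn (v ∘ Fin.snocEquiv (fun _ => ι) (i, σ))) f =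
        iteratedDirDeriv (List.ofFn (v ∘ σ)) fun y => fderiv ℝ f y (v i) := by
    simp only [List.ofFn_succ', List.concat_eq_append, iteratedDirDeriv_append]
    simp [Fin.snocEquiv, Function.comp_def, iteratedDirDeriv]
  have hsum : ∑ σ : Fin (k + 1) → ι, ‖iteratedDirDeriv (List.ofFn (v ∘ σ)) f x‖ =
      ∑ i, ∑ σ : Fin k → ι,
        ‖iteratedDirDeriv (List.ofFn (v ∘ σ)) (fun y => fderiv ℝ f y (v i)) x‖ := by
    rw [← (Fin.snocEquiv fun _ => ι).sum_comp, Fintype.sum_prod_type]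
    simp only [snoc]
  simp only [taylorTerm, hsum, ← Finset.mul_sum, Nat.factorial_succ, pow_succ]
  push_cast
  field_simp

theorem taylorTerm_congr (h : f =ᶠ[𝓝 x] g) (k : ℕ) :
    taylorTerm ρ v k f x = taylorTerm ρ v k g x := by
  simp only [taylorTerm, (iteratedDirDeriv_congr h _).eq_of_nhds]

theorem taylorTerm_add_le (hρ : 0 ≤ ρ) {k : ℕ} (hf : ContDiffAt ℝ k f x)
    (hg : ContDiffAt ℝ k g x) :
    taylorTerm ρ v k (f + g) x ≤ taylorTerm ρ v k f x + taylorTerm ρ v k g x := by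
  rw [taylorTerm, taylorTerm, taylorTerm, ← mul_add, ← Finset.sum_add_distrib]
  gcongr with σ
  have h := iteratedDirDeriv_add (l := List.ofFn (v ∘ σ)) (by simpa using hf) (by simpa using hg)
  exact h.eq_of_nhds ▸ norm_add_le _ _

theorem succ_mul_sum_antidiagonal_mul {R : Type*} [CommSemiring R] (A B : ℕ → R) (k : ℕ) :
    (k + 1) * ∑ p ∈ antidiagonal (k + 1), A p.1 * B p.2 =
      ∑ p ∈ antidiagonal k, ((p.1 + 1) * A (p.1 + 1)) * B p.2 +
        ∑ p ∈ antidiagonal k, A p.1 * ((p.2 + 1) * B (p.2 + 1)) := by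
  have hleft := Finset.Nat.sum_antidiagonal_succ (n := k) (f := fun p => p.1 * A p.1 * B p.2)
  have hright := Finset.Nat.sum_antidiagonal_succ' (n := k) (f := fun p => A p.1 * (p.2 * B p.2))
  push_cast at hleft hright
  simp only [zero_mul, mul_zero, zero_add] at hleft hright
  rw [← hleft, ← hright, ← Finset.sum_add_distrib, Finset.mul_sum]
  refine Finset.sum_congr rfl fun p hp => ?_
  have hp : (p.1 : R) + p.2 = k + 1 := mod_cast
    congrArg (Nat.cast (R := R)) (Finset.HasAntidiagonal.mem_antidiagonal.1 hp)
  rw [← hp]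
  ring

theorem taylorTerm_mul_le {A : Type*} [NormedRing A] [NormedAlgebra ℝ A] (hρ : 0 ≤ ρ) {k : ℕ}
    {f g : E → A} (hf : ContDiffAt ℝ k f x) (hg : ContDiffAt ℝ k g x) :
    taylorTerm ρ v k (f * g) x ≤
      ∑ p ∈ antidiagonal k, taylorTerm ρ v p.1 f x * taylorTerm ρ v p.2 g x := by
  induction k generalizing f g with
  | zero => simpa [taylorTerm_zero] using norm_mul_le (f x) (g x)
  | succ k ih =>
    have hf' (i : ι) := contDiffAt_fderiv_apply (n := k) (mod_cast hf) (v i)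
    have hg' (i : ι) := contDiffAt_fderiv_apply (n := k) (mod_cast hg) (v i)
    have hf₀ : ContDiffAt ℝ k f x := hf.of_le (by simp)
    have hg₀ : ContDiffAt ℝ k g x := hg.of_le (by simp)
    have leibniz (i : ι) : (fun y => fderiv ℝ (f * g) y (v i)) =ᶠ[𝓝 x]
        (fun y => fderiv ℝ f y (v i)) * g + f * fun y => fderiv ℝ g y (v i) := by
      filter_upwards [eventually_contDiffAt hf, eventually_contDiffAt hg] with y hfy hgy
      rw [fderiv_mul' (hfy.differentiableAt (by simp)) (hgy.differentiableAt (by simp))]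
      simp [add_comm]
    refine le_of_mul_le_mul_left ?_ (Nat.cast_add_one_pos (α := ℝ) k)
    calc (k + 1) * taylorTerm ρ v (k + 1) (f * g) x
        ≤ ρ * ∑ i, (∑ p ∈ antidiagonal k,
              taylorTerm ρ v p.1 (fun y => fderiv ℝ f y (v i)) x * taylorTerm ρ v p.2 g x +
            ∑ p ∈ antidiagonal k,
              taylorTerm ρ v p.1 f x * taylorTerm ρ v p.2 (fun y => fderiv ℝ g y (v i)) x) := by
          rw [taylorTerm_succ]
          gcongr with i
          rw [taylorTerm_congr (leibniz i)]
          exact (taylorTerm_add_le hρ ((hf' i).mul hg₀) (hf₀.mul (hg' i))).trans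
            (add_le_add (ih (hf' i) hg₀) (ih hf₀ (hg' i)))
      _ = (k + 1) * ∑ p ∈ antidiagonal (k + 1),
            taylorTerm ρ v p.1 f x * taylorTerm ρ v p.2 g x := by
          rw [succ_mul_sum_antidiagonal_mul (fun p => taylorTerm ρ v p f x)
            fun q => taylorTerm ρ v q g x]
          simp only [taylorTerm_succ, Finset.sum_add_distrib, Finset.sum_comm (s := Finset.univ),
            mul_add, Finset.mul_sum, Finset.sum_mul, mul_assoc, mul_left_comm ρ]

/-- The Taylor majorant of `f` at `x` in the directions `v`, truncated at total order `ν`. -/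
noncomputable def taylorSum (ρ : ℝ) (v : ι → E) (ν : ℕ) (f : E → F) (x : E) : ℝ :=
  ∑ k ∈ Finset.range (ν + 1), taylorTerm ρ v k f x

theorem taylorSum_nonneg (hρ : 0 ≤ ρ) (ν : ℕ) (f : E → F) : 0 ≤ taylorSum ρ v ν f x :=
  Finset.sum_nonneg fun k _ => taylorTerm_nonneg hρ k f

theorem taylorSum_congr (h : f =ᶠ[𝓝 x] g) (ν : ℕ) :
    taylorSum ρ v ν f x = taylorSum ρ v ν g x :=
  Finset.sum_congr rfl fun k _ => taylorTerm_congr h k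

theorem taylorSum_const_smul (c : ℝ) (ν : ℕ) (f : E → F) :
    taylorSum ρ v ν (c • f) x = |c| * taylorSum ρ v ν f x := by
  simp only [taylorSum, taylorTerm, iteratedDirDeriv_const_smul, Pi.smul_apply, norm_smul,
    Real.norm_eq_abs, Finset.mul_sum, mul_left_comm]

theorem taylorSum_neg (ν : ℕ) (f : E → F) : taylorSum ρ v ν (-f) x = taylorSum ρ v ν f x := by
  simpa using taylorSum_const_smul (ρ := ρ) (v := v) (x := x) (-1) ν f

theorem contDiffAt_of_mem_range {ν k : ℕ} (hf : ContDiffAt ℝ ν f x)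
    (hk : k ∈ Finset.range (ν + 1)) : ContDiffAt ℝ k f x :=
  hf.of_le (mod_cast Finset.mem_range_succ_iff.1 hk)

theorem taylorSum_add_le (hρ : 0 ≤ ρ) {ν : ℕ} (hf : ContDiffAt ℝ ν f x)
    (hg : ContDiffAt ℝ ν g x) :
    taylorSum ρ v ν (f + g) x ≤ taylorSum ρ v ν f x + taylorSum ρ v ν g x := by
  rw [taylorSum, taylorSum, taylorSum, ← Finset.sum_add_distrib]
  exact Finset.sum_le_sum fun k hk => taylorTerm_add_le hρ
    (contDiffAt_of_mem_range hf hk) (contDiffAt_of_mem_range hg hk)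

theorem taylorSum_sum_le {κ : Type*} (hρ : 0 ≤ ρ) {ν : ℕ} {f : κ → E → F}
    (hf : ∀ i, ContDiffAt ℝ ν (f i) x) (s : Finset κ) :
    taylorSum ρ v ν (∑ i ∈ s, f i) x ≤ ∑ i ∈ s, taylorSum ρ v ν (f i) x := by
  classical
  induction s using Finset.induction_on with
  | empty => simpa using (taylorSum_const_smul (ρ := ρ) (v := v) (x := x) 0 ν (0 : E → F)).le
  | insert i s hi ih =>
    have hsum : ContDiffAt ℝ ν (∑ j ∈ s, f j) x := by
      simpa only [Finset.sum_fn] using ContDiffAt.sum fun j _ => hf j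
    rw [Finset.sum_insert hi, Finset.sum_insert hi]
    exact (taylorSum_add_le hρ (hf i) hsum).trans (by gcongr)

theorem taylorSum_mul_le {A : Type*} [NormedRing A] [NormedAlgebra ℝ A] (hρ : 0 ≤ ρ) {ν : ℕ}
    {f g : E → A} (hf : ContDiffAt ℝ ν f x) (hg : ContDiffAt ℝ ν g x) :
    taylorSum ρ v ν (f * g) x ≤ taylorSum ρ v ν f x * taylorSum ρ v ν g x := by
  calc taylorSum ρ v ν (f * g) x
      ≤ ∑ k ∈ Finset.range (ν + 1), ∑ p ∈ antidiagonal k,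
          taylorTerm ρ v p.1 f x * taylorTerm ρ v p.2 g x :=
        Finset.sum_le_sum fun k hk => taylorTerm_mul_le hρ
          (contDiffAt_of_mem_range hf hk) (contDiffAt_of_mem_range hg hk)
    _ = ∑ p ∈ Finset.range (ν + 1), ∑ q ∈ Finset.range (ν + 1 - p),
          taylorTerm ρ v p f x * taylorTerm ρ v q g x := by
        simp only [Finset.Nat.sum_antidiagonal_eq_sum_range_succ_mk]
        exact Finset.sum_range_diag_flip (ν + 1)
          fun p q => taylorTerm ρ v p f x * taylorTerm ρ v q g x
    _ ≤ taylorSum ρ v ν f x * taylorSum ρ v ν g x := by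
        rw [taylorSum, taylorSum, Finset.sum_mul_sum]
        refine Finset.sum_le_sum fun p _ => Finset.sum_le_sum_of_subset_of_nonneg
          (Finset.range_subset_range.2 (Nat.sub_le _ _)) fun q _ _ => ?_
        exact mul_nonneg (taylorTerm_nonneg hρ p f) (taylorTerm_nonneg hρ q g)

end TaylorSum

section CurveGronwall

open Set

variable {ι E F : Type*} [Fintype ι] [NormedAddCommGroup E] [NormedSpace ℝ E]
  [NormedAddCommGroup F] [NormedSpace ℝ F] {ρ : ℝ} {v : ι → E} {γ : ℝ → E} {e : E}

theorem hasDerivAt_iteratedDirDeriv_comp {f : E → F} {l : List E} {s : ℝ}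
    (hf : ContDiffAt ℝ (l.length + 1) f (γ s)) (hγ : HasDerivAt γ e s) :
    HasDerivAt (fun r => iteratedDirDeriv l f (γ r))
      (iteratedDirDeriv l (fun y => fderiv ℝ f y e) (γ s)) s := by
  have hdiff : DifferentiableAt ℝ (iteratedDirDeriv l f) (γ s) :=
    (contDiffAt_iteratedDirDeriv (by rwa [add_comm])).differentiableAt_one
  rw [iteratedDirDeriv_fderiv_apply hf]
  exact hdiff.hasFDerivAt.comp_hasDerivAt s hγ

theorem taylorSum_eq_sum_norm (hρ : 0 ≤ ρ) (ν : ℕ) (f : E → F) (x : E) :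
    taylorSum ρ v ν f x = ∑ s : Σ k : Fin (ν + 1), Fin k → ι,
      ‖(ρ ^ (s.1 : ℕ) / (s.1 : ℕ)!) • iteratedDirDeriv (List.ofFn (v ∘ s.2)) f x‖ := by
  have hcoeff (k : ℕ) : ‖ρ ^ k / (k ! : ℝ)‖ = ρ ^ k / k ! := Real.norm_of_nonneg (by positivity)
  simp only [taylorSum, taylorTerm, Finset.sum_range, Fintype.sum_sigma, norm_smul, hcoeff,
    Finset.mul_sum]

theorem sum_taylorSum_le_mul_exp {κ : Type*} [Fintype κ] {ν : ℕ} {w : κ → E → F} {L a b t : ℝ}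
    (hρ : 0 ≤ ρ) (hγ : ContinuousOn γ (Icc a b)) (hγ' : ∀ s ∈ Ioo a b, HasDerivAt γ e s)
    (hw : ∀ i, ∀ s ∈ Icc a b, ContDiffAt ℝ (ν + 1) (w i) (γ s))
    (hbound : ∀ s ∈ Ioo a b, ∑ i, taylorSum ρ v ν (fun y => fderiv ℝ (w i) y e) (γ s) ≤
      L * ∑ i, taylorSum ρ v ν (w i) (γ s))
    (ht : t ∈ Icc a b) :
    ∑ i, taylorSum ρ v ν (w i) (γ t) ≤
      (∑ i, taylorSum ρ v ν (w i) (γ a)) * Real.exp (L * (t - a)) := by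
  have length_le (k : Fin (ν + 1)) (σ : Fin k → ι) : (List.ofFn (v ∘ σ)).length ≤ ν := by
    simpa using Nat.le_of_lt_succ k.2
  have hw' (i : κ) {s : ℝ} (hs : s ∈ Icc a b) (k : Fin (ν + 1)) (σ : Fin k → ι) :
      ContDiffAt ℝ ((List.ofFn (v ∘ σ)).length + 1) (w i) (γ s) :=
    (hw i s hs).of_le (by gcongr; exact mod_cast length_le k σ)
  simp only [taylorSum_eq_sum_norm hρ, ← Fintype.sum_prod_type'] at hbound ⊢
  refine sum_norm_le_mul_exp_of_sum_norm_deriv_le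
    (f := fun (c : κ × Σ k : Fin (ν + 1), Fin k → ι) s =>
      (ρ ^ (c.2.1 : ℕ) / (c.2.1 : ℕ)!) • iteratedDirDeriv (List.ofFn (v ∘ c.2.2)) (w c.1) (γ s))
    (fun ⟨i, k, σ⟩ s hs => ?_) (fun ⟨i, k, σ⟩ s hs => ?_) hbound ht
  · have hcont : ContinuousAt (iteratedDirDeriv (List.ofFn (v ∘ σ)) (w i)) (γ s) :=
      (contDiffAt_iteratedDirDeriv (n := 1) (by
        rw [add_comm]; exact hw' i hs k σ)).continuousAt
    exact (hcont.comp_continuousWithinAt (hγ s hs)).const_smul _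
  · exact (hasDerivAt_iteratedDirDeriv_comp (hw' i (Ioo_subset_Icc_self hs) k σ)
      (hγ' s hs)).const_smul _

end CurveGronwall

section MultiIndex

variable {ι K : Type*} [Fintype ι] [DecidableEq ι] [Field K] [CharZero K]

theorem prod_factorial_add_single (γ : ι → ℕ) (i : ι) :
    ∏ j, ((γ + Pi.single i 1 : ι → ℕ) j)! = (γ i + 1) * ∏ j, (γ j)! := by
  have factor (j : ι) :
      ((γ + Pi.single i 1 : ι → ℕ) j)! = (if j = i then γ i + 1 else 1) * (γ j)! := by
    obtain rfl | hji := eq_or_ne j i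
    · simp [Nat.factorial_succ]
    · simp [hji]
  simp only [factor, Finset.prod_mul_distrib, Fintype.prod_ite_eq']

theorem succ_mul_sum_piAntidiag_div_factorial (G : (ι → ℕ) → K) (k : ℕ) :
    (k + 1) * ∑ β ∈ Finset.piAntidiag Finset.univ (k + 1), G β / ∏ i, ((β i)! : K) =
      ∑ i, ∑ γ ∈ Finset.piAntidiag Finset.univ k, G (γ + Pi.single i 1) / ∏ j, ((γ j)! : K) := by
  have remove_one (i : ι) :
      ∑ γ ∈ Finset.piAntidiag Finset.univ k, G (γ + Pi.single i 1) / ∏ j, ((γ j)! : K) =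
        ∑ β ∈ Finset.piAntidiag Finset.univ (k + 1), β i * (G β / ∏ j, ((β j)! : K)) := by
    refine Finset.sum_of_injOn (· + Pi.single i 1) (add_left_injective _).injOn ?_ ?_ ?_
    · intro γ hγ
      simpa [Finset.sum_add_distrib] using hγ
    · intro β hβ hβ'
      have : β i = 0 := by
        by_contra hi
        have hle : Pi.single i 1 ≤ β := by
          intro j
          obtain rfl | hji := eq_or_ne j i
          · simpa using Nat.one_le_iff_ne_zero.2 hi
          · simp [hji]
        refine hβ' ⟨β - Pi.single i 1, ?_, tsub_add_cancel_of_le hle⟩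
        have hsum : ∑ j, (β - Pi.single i 1 + Pi.single i 1 : ι → ℕ) j = k + 1 := by
          rw [tsub_add_cancel_of_le hle]
          exact (Finset.mem_piAntidiag.1 hβ).1
        simpa [Finset.sum_add_distrib] using hsum
      simp [this]
    · intro γ _
      have hprod := congrArg (Nat.cast (R := K)) (prod_factorial_add_single γ i)
      push_cast at hprod
      rw [hprod, Pi.add_apply, Pi.single_eq_same]
      push_cast
      field_simp
  simp only [remove_one]
  rw [Finset.sum_comm, Finset.mul_sum]
  refine Finset.sum_congr rfl fun β hβ => ?_
  rw [← Finset.sum_mul, ← Nat.cast_sum, (Finset.mem_piAntidiag.1 hβ).1]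
  push_cast
  rfl

theorem sum_count_ofFn_div_factorial (G : (ι → ℕ) → K) (k : ℕ) :
    (∑ σ : Fin k → ι, G fun i => (List.ofFn σ).count i) / k ! =
      ∑ β ∈ Finset.piAntidiag Finset.univ k, G β / ∏ i, ((β i)! : K) := by
  induction k generalizing G with
  | zero => simp [Pi.zero_def]
  | succ k ih =>
    have count_cons (i : ι) (σ : Fin k → ι) :
        (fun j => (List.ofFn (Fin.consEquiv (fun _ => ι) (i, σ))).count j) =
          (fun j => (List.ofFn σ).count j) + Pi.single i 1 := by
      ext j
      simp [Fin.consEquiv, List.ofFn_succ, List.count_cons, Pi.single_apply, eq_comm (a := i)]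
    refine mul_left_cancel₀ (Nat.cast_add_one_ne_zero k : (k + 1 : K) ≠ 0) ?_
    rw [succ_mul_sum_piAntidiag_div_factorial, ← (Fin.consEquiv fun _ => ι).sum_comp,
      Fintype.sum_prod_type]
    simp only [count_cons, ← ih fun β => G (β + _), ← Finset.sum_div, Nat.factorial_succ]
    push_cast
    field_simp

end MultiIndex

section MultiIndexWord

/-- The word `[0, …, 0, 1, …, 1, …]` over `Fin n` in which the letter `i` occurs `β i` times. -/
def multiIndexWord {n : ℕ} (β : Fin n → ℕ) : List (Fin n) :=
  (List.finRange n).flatMap fun i => List.replicate (β i) i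

variable {n : ℕ}

theorem count_multiIndexWord (β : Fin n → ℕ) (i : Fin n) : (multiIndexWord β).count i = β i := by
  simp [multiIndexWord, List.count_flatMap, Function.comp_def, List.count_replicate,
    ← Fin.sum_univ_def]

theorem length_multiIndexWord (β : Fin n → ℕ) : (multiIndexWord β).length = ∑ i, β i := by
  simp [multiIndexWord, List.length_flatMap, Fin.sum_univ_def]

theorem multiIndexWord_cons (p : ℕ) (α : Fin n → ℕ) :
    multiIndexWord (Fin.cons p α : Fin (n + 1) → ℕ) =
      List.replicate p 0 ++ (multiIndexWord α).map Fin.succ := by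
  simp [multiIndexWord, List.finRange_succ, List.flatMap_map, List.map_flatMap]

theorem multiIndexWord_count_perm (l : List (Fin n)) :
    (multiIndexWord fun i => l.count i).Perm l :=
  List.perm_iff_count.2 fun i => count_multiIndexWord _ i

variable {E F : Type*} [NormedAddCommGroup E] [NormedSpace ℝ E]
  [NormedAddCommGroup F] [NormedSpace ℝ F] {f : E → F} {x : E}

theorem taylorTerm_eq_sum_piAntidiag (ρ : ℝ) (v : Fin n → E) {k : ℕ} (hf : ContDiffAt ℝ k f x) :
    taylorTerm ρ v k f x = ∑ β ∈ Finset.piAntidiag Finset.univ k,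
      ρ ^ k / (∏ i, ((β i)! : ℝ)) * ‖iteratedDirDeriv ((multiIndexWord β).map v) f x‖ := by
  have sort_word (σ : Fin k → Fin n) : iteratedDirDeriv (List.ofFn (v ∘ σ)) f x =
      iteratedDirDeriv ((multiIndexWord fun i => (List.ofFn σ).count i).map v) f x := by
    have hperm := ((multiIndexWord_count_perm (List.ofFn σ)).map v).symm
    rw [List.map_ofFn] at hperm
    exact (iteratedDirDeriv_perm hperm (by simpa using hf)).eq_of_nhds
  simp only [taylorTerm, sort_word, div_mul_eq_mul_div, mul_div_assoc, ← Finset.mul_sum]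
  rw [sum_count_ofFn_div_factorial
    fun β => ‖iteratedDirDeriv ((multiIndexWord β).map v) f x‖]

end MultiIndexWord

section MixedPartial

variable {E F : Type*} [NormedAddCommGroup E] [NormedSpace ℝ E]
  [NormedAddCommGroup F] [NormedSpace ℝ F] {f g : E → F} {x : E} {l : List E}

theorem iterate_eventuallyEq_iteratedDirDeriv {P : (E → F) → E → F} {v : E}
    (hP : ∀ g x, DifferentiableAt ℝ g x → P g x = fderiv ℝ g x v)
    (hg : g =ᶠ[𝓝 x] iteratedDirDeriv l f) {p : ℕ} (hf : ContDiffAt ℝ (p + l.length : ℕ) f x) :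
    P^[p] g =ᶠ[𝓝 x] iteratedDirDeriv (List.replicate p v ++ l) f := by
  induction p with
  | zero => exact hg
  | succ p ih =>
    have ih := ih (hf.of_le (by gcongr; simp))
    rw [Function.iterate_succ_apply']
    filter_upwards [ih.eventuallyEq_nhds, eventually_contDiffAt hf] with y hy hfy
    have hdiff : DifferentiableAt ℝ (iteratedDirDeriv (List.replicate p v ++ l) f) y :=
      (contDiffAt_iteratedDirDeriv
        (by simpa [add_comm (1 : ℕ∞ω), add_assoc] using hfy)).differentiableAt_one
    rw [hP _ _ (hy.differentiableAt_iff.2 hdiff), hy.fderiv_eq]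
    rfl

theorem foldr_iterate_eventuallyEq_iteratedDirDeriv {ι : Type*} {P : ι → (E → F) → E → F}
    {v : ι → E} (hP : ∀ i g x, DifferentiableAt ℝ g x → P i g x = fderiv ℝ g x (v i))
    (α : ι → ℕ) {is : List ι}
    (hf : ContDiffAt ℝ (is.flatMap fun i => List.replicate (α i) i).length f x) :
    is.foldr (fun i g => (P i)^[α i] ∘ g) id f =ᶠ[𝓝 x]
      iteratedDirDeriv ((is.flatMap fun i => List.replicate (α i) i).map v) f := by
  induction is with
  | nil => rfl
  | cons i is ih =>
    have ih := ih (hf.of_le (by simp))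
    simpa using iterate_eventuallyEq_iteratedDirDeriv (hP i) ih (p := α i) (by simpa using hf)

/-- The coordinate directions of `ℝ × ℝ^m`, the time direction having index `0`. -/
def coordDir (m : ℕ) : Fin (m + 1) → ℝ × (Fin m → ℝ) :=
  Fin.cons (1, 0) fun i => (0, Pi.single i 1)

variable {m : ℕ}

theorem pdt_eq_fderiv {f : ℝ × (Fin m → ℝ) → ℂ} {x : ℝ × (Fin m → ℝ)}
    (hf : DifferentiableAt ℝ f x) : pdt f x = fderiv ℝ f x (coordDir m 0) :=
  (hf.hasFDerivAt.comp_hasDerivAt x.1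
    ((hasDerivAt_id x.1).prodMk (hasDerivAt_const x.1 x.2))).deriv

theorem pdz_eq_fderiv (i : Fin m) {f : ℝ × (Fin m → ℝ) → ℂ} {x : ℝ × (Fin m → ℝ)}
    (hf : DifferentiableAt ℝ f x) : pdz i f x = fderiv ℝ f x (coordDir m i.succ) := by
  have hline : HasDerivAt (fun s => (x.1, Function.update x.2 i s)) (coordDir m i.succ) (x.2 i) :=
    (hasDerivAt_const _ _).prodMk (hasDerivAt_update x.2 i (x.2 i))
  have hx : (x.1, Function.update x.2 i (x.2 i)) = x := by simp
  rw [← hx] at hf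
  exact ((hf.hasFDerivAt.comp_hasDerivAt _ hline).deriv).trans (by rw [hx])

theorem mixedPartial_eventuallyEq {f : ℝ × (Fin m → ℝ) → ℂ} {x : ℝ × (Fin m → ℝ)}
    {p : ℕ} {α : Fin m → ℕ} (hf : ContDiffAt ℝ (p + ∑ i, α i : ℕ) f x) :
    mixedPartial p α f =ᶠ[𝓝 x] iteratedDirDeriv
      ((multiIndexWord (Fin.cons p α : Fin (m + 1) → ℕ)).map (coordDir m)) f := by
  rw [← length_multiIndexWord] at hf
  have hα := foldr_iterate_eventuallyEq_iteratedDirDeriv (fun i g x => pdz_eq_fderiv i (f := g))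
    α (is := List.finRange m) (hf.of_le (by simp [multiIndexWord]))
  have hpα := iterate_eventuallyEq_iteratedDirDeriv (fun g x => pdt_eq_fderiv (f := g)) hα
    (p := p) (by simpa [multiIndexWord] using hf)
  rwa [multiIndexWord_cons, List.map_append, List.map_replicate, List.map_map]

theorem sum_antidiagonalTuple_succ {R : Type*} [AddCommMonoid R] (G : (Fin (m + 1) → ℕ) → R)
    (n : ℕ) :
    ∑ β ∈ Finset.Nat.antidiagonalTuple (m + 1) n, G β =
      ∑ p ∈ antidiagonal n, ∑ α ∈ Finset.Nat.antidiagonalTuple m p.2, G (Fin.cons p.1 α) := by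
  rw [Finset.sum_sigma']
  refine Finset.sum_bij' (fun β _ => ⟨(β 0, ∑ i : Fin m, β i.succ), Fin.tail β⟩)
    (fun q _ => Fin.cons q.1.1 q.2) ?_ ?_ ?_ ?_ ?_
  · intro β hβ
    simpa [Finset.Nat.mem_antidiagonalTuple, Fin.sum_univ_succ, Fin.tail] using hβ
  · rintro ⟨⟨p, k⟩, α⟩ hq
    obtain ⟨hpk, hα⟩ : p + k = n ∧ ∑ i, α i = k := by
      simpa [Finset.Nat.mem_antidiagonalTuple] using hq
    simp [Finset.Nat.mem_antidiagonalTuple, Fin.sum_univ_succ, hα, hpk]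
  · intro β _
    simp
  · rintro ⟨⟨p, k⟩, α⟩ hq
    obtain ⟨-, hα⟩ : p + k = n ∧ ∑ i, α i = k := by
      simpa [Finset.Nat.mem_antidiagonalTuple] using hq
    simp [hα]
  · intro β _
    simp

theorem taylorSum_coordDir (ρ : ℝ) {ν : ℕ} {f : ℝ × (Fin m → ℝ) → ℂ} {x : ℝ × (Fin m → ℝ)}
    (hf : ContDiffAt ℝ ν f x) :
    taylorSum ρ (coordDir m) ν f x =
      ∑ p ∈ Finset.range (ν + 1), ∑ k ∈ Finset.range (ν + 1 - p),
        ∑ α ∈ Finset.Nat.antidiagonalTuple m k,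
          ρ ^ (p + k) / (p ! * ∏ i, ((α i)! : ℝ)) * ‖mixedPartial p α f x‖ := by
  let term (p k : ℕ) : ℝ := ∑ α ∈ Finset.Nat.antidiagonalTuple m k,
    ρ ^ (p + k) / (p ! * ∏ i, ((α i)! : ℝ)) * ‖mixedPartial p α f x‖
  have order_n (n : ℕ) (hn : n ∈ Finset.range (ν + 1)) :
      taylorTerm ρ (coordDir m) n f x = ∑ p ∈ antidiagonal n, term p.1 p.2 := by
    rw [taylorTerm_eq_sum_piAntidiag ρ _ (contDiffAt_of_mem_range hf hn),
      Finset.piAntidiag_univ_fin_eq_antidiagonalTuple, sum_antidiagonalTuple_succ]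
    refine Finset.sum_congr rfl fun p hp => Finset.sum_congr rfl fun α hα => ?_
    obtain rfl : p.1 + p.2 = n := Finset.HasAntidiagonal.mem_antidiagonal.1 hp
    have hfα : ContDiffAt ℝ (p.1 + ∑ i, α i : ℕ) f x := by
      rw [Finset.Nat.mem_antidiagonalTuple.1 hα]
      exact contDiffAt_of_mem_range hf hn
    rw [(mixedPartial_eventuallyEq hfα).eq_of_nhds, Fin.prod_univ_succ]
    rfl
  rw [taylorSum, Finset.sum_congr rfl order_n]
  simp only [Finset.Nat.sum_antidiagonal_eq_sum_range_succ_mk]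
  exact Finset.sum_range_diag_flip (ν + 1) term

theorem taylorMajorant_eq_sum_taylorSum {N : ℕ} (ρ : ℝ) {ν : ℕ}
    {u : ℝ × (Fin m → ℝ) → Matrix (Fin N) (Fin N) ℂ} {x : ℝ × (Fin m → ℝ)}
    (hu : ∀ i j, ContDiffAt ℝ ν (fun y => u y i j) x) :
    taylorMajorant ρ ν u x =
      ∑ q : Fin N × Fin N, taylorSum ρ (coordDir m) ν (fun y => u y q.1 q.2) x := by
  simp only [taylorMajorant, taylorSum_coordDir ρ (hu _ _), ← Fintype.sum_prod_type',
    Finset.mul_sum, Finset.sum_comm (s := (Finset.univ : Finset (Fin N × Fin N)))]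

end MixedPartial

section Transport

open Set

theorem sum_sum_mul_le_sum_mul_sum {ι R : Type*} [Fintype ι] [Semiring R] [PartialOrder R]
    [IsOrderedRing R] {P Q : ι × ι → R} (hP : ∀ q, 0 ≤ P q) (hQ : ∀ q, 0 ≤ Q q) :
    ∑ q : ι × ι, ∑ k, P (q.1, k) * Q (k, q.2) ≤ (∑ q, P q) * ∑ q, Q q := by
  have row_le (k : ι) : ∑ j, Q (k, j) ≤ ∑ q, Q q := by
    rw [Fintype.sum_prod_type]
    exact Finset.single_le_sum (f := fun k => ∑ j, Q (k, j))
      (fun k _ => Finset.sum_nonneg fun j _ => hQ _) (Finset.mem_univ k)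
  calc ∑ q : ι × ι, ∑ k, P (q.1, k) * Q (k, q.2)
      = ∑ p : ι × ι, P p * ∑ j, Q (p.2, j) := by
        simp only [Fintype.sum_prod_type, Finset.mul_sum]
        exact Finset.sum_congr rfl fun i _ => Finset.sum_comm
    _ ≤ ∑ p : ι × ι, P p * ∑ q, Q q := by gcongr with p; exacts [hP p, row_le p.2]
    _ = (∑ q, P q) * ∑ q, Q q := (Finset.sum_mul ..).symm

variable {E : Type*} [NormedAddCommGroup E] [NormedSpace ℝ E] {m ν : ℕ} {ρ : ℝ}

theorem sum_taylorSum_neg_matrix_mul_le {ι N A : Type*} [Fintype ι] [Fintype N] [NormedRing A]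
    [NormedAlgebra ℝ A] (hρ : 0 ≤ ρ) {v : ι → E} {a w : E → Matrix N N A} {x : E}
    (ha : ∀ i j, ContDiffAt ℝ ν (fun y => a y i j) x)
    (hw : ∀ i j, ContDiffAt ℝ ν (fun y => w y i j) x) :
    ∑ q : N × N, taylorSum ρ v ν (fun y => (-(a y * w y)) q.1 q.2) x ≤
      (∑ q : N × N, taylorSum ρ v ν (fun y => a y q.1 q.2) x) *
        ∑ q : N × N, taylorSum ρ v ν (fun y => w y q.1 q.2) x := by
  have entry_le (i j : N) : taylorSum ρ v ν (fun y => (-(a y * w y)) i j) x ≤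
      ∑ k, taylorSum ρ v ν (fun y => a y i k) x * taylorSum ρ v ν (fun y => w y k j) x := by
    have hentry : (fun y => (-(a y * w y)) i j) =
        -∑ k, (fun y => a y i k) * fun y => w y k j := by
      ext y
      simp [Matrix.mul_apply]
    rw [hentry, taylorSum_neg]
    exact (taylorSum_sum_le hρ (fun k => (ha i k).mul (hw k j)) _).trans
      (Finset.sum_le_sum fun k _ => taylorSum_mul_le hρ (ha i k) (hw k j))
  exact (Finset.sum_le_sum fun q _ => entry_le q.1 q.2).trans
    (sum_sum_mul_le_sum_mul_sum (fun _ => taylorSum_nonneg hρ ν _) fun _ =>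
      taylorSum_nonneg hρ ν _)

theorem contDiffAt_entry {I J F : Type*} [Fintype I] [Fintype J] [NormedAddCommGroup F]
    [NormedSpace ℝ F] {n : ℕ∞ω} {u : E → Matrix I J F} {x : E} (hu : ContDiffAt ℝ n u x)
    (i : I) (j : J) :
    ContDiffAt ℝ n (fun y => u y i j) x :=
  contDiffAt_pi.1 (contDiffAt_pi.1 hu i) j

theorem fderiv_entry_eq_of_hasDerivAt {I J : Type*} [Finite I] [Finite J]
    {w : ℝ × (Fin m → ℝ) → Matrix I J ℂ} {w' : Matrix I J ℂ} {x : ℝ × (Fin m → ℝ)}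
    (hw : DifferentiableAt ℝ w x) (hw' : HasDerivAt (fun s => w (s, x.2)) w' x.1)
    (i : I) (j : J) :
    fderiv ℝ (fun y => w y i j) x (coordDir m 0) = w' i j := by
  cases nonempty_fintype I
  cases nonempty_fintype J
  have hdiff : DifferentiableAt ℝ (fun y => w y i j) x :=
    differentiableAt_pi.1 (differentiableAt_pi.1 hw i) j
  rw [← pdt_eq_fderiv hdiff]
  exact (hasDerivAt_pi.1 (hasDerivAt_pi.1 hw' i) j).deriv

theorem taylorMajorant_gronwall_estimate_general {N : ℕ} {z : Fin m → ℝ}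
    {a w : ℝ × (Fin m → ℝ) → Matrix (Fin N) (Fin N) ℂ} {T L M : ℝ} (hρ : 0 ≤ ρ)
    (ha : ∀ t ∈ Ioo 0 T, ContDiffAt ℝ ν a (t, z))
    (hw : ∀ t ∈ Icc 0 T, ContDiffAt ℝ (ν + 1) w (t, z))
    (htransport : ∀ t ∈ Ioo 0 T, ∀ᶠ x in 𝓝 (t, z),
      HasDerivAt (fun s => w (s, x.2)) (-(a x * w x)) x.1)
    (hLa : ∀ t ∈ Ioo 0 T, taylorMajorant ρ ν a (t, z) ≤ L)
    (hMw : taylorMajorant ρ ν w (0, z) ≤ M) {t : ℝ} (ht : t ∈ Icc 0 T) :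
    taylorMajorant ρ ν w (t, z) ≤ M * Real.exp (L * t) := by
  have hw₀ {s : ℝ} (hs : s ∈ Icc 0 T) (i j : Fin N) :
      ContDiffAt ℝ ν (fun y => w y i j) (s, z) :=
    contDiffAt_entry ((hw s hs).of_le le_self_add) i j
  have dw_le (s : ℝ) (hs : s ∈ Ioo 0 T) :
      ∑ q : Fin N × Fin N, taylorSum ρ (coordDir m) ν
          (fun y => fderiv ℝ (fun y => w y q.1 q.2) y (coordDir m 0)) (s, z) ≤
        L * ∑ q : Fin N × Fin N, taylorSum ρ (coordDir m) ν (fun y => w y q.1 q.2) (s, z) := by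
    have hwt (q : Fin N × Fin N) :
        (fun y => fderiv ℝ (fun y => w y q.1 q.2) y (coordDir m 0)) =ᶠ[𝓝 (s, z)]
          fun y => (-(a y * w y)) q.1 q.2 := by
      filter_upwards [htransport s hs, eventually_contDiffAt
        (n := ν + 1) (hw s (Ioo_subset_Icc_self hs))] with y hy hwy
      exact fderiv_entry_eq_of_hasDerivAt (hwy.differentiableAt (by simp)) hy q.1 q.2
    have ha₀ := contDiffAt_entry (ha s hs)
    simp only [taylorSum_congr (hwt _)]
    refine (sum_taylorSum_neg_matrix_mul_le hρ ha₀ (hw₀ (Ioo_subset_Icc_self hs))).trans ?_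
    rw [← taylorMajorant_eq_sum_taylorSum ρ ha₀]
    exact mul_le_mul_of_nonneg_right (hLa s hs)
      (Finset.sum_nonneg fun q _ => taylorSum_nonneg hρ ν _)
  have gronwall := sum_taylorSum_le_mul_exp (γ := fun s => (s, z)) hρ (by fun_prop)
    (fun s _ => (hasDerivAt_id s).prodMk (hasDerivAt_const s z))
    (fun (q : Fin N × Fin N) s hs => contDiffAt_entry (hw s hs) q.1 q.2) dw_le ht
  rw [← taylorMajorant_eq_sum_taylorSum ρ (hw₀ ht), sub_zero, ← taylorMajorant_eq_sum_taylorSum ρ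
    (hw₀ (left_mem_Icc.2 (ht.1.trans ht.2)))] at gronwall
  exact gronwall.trans (by gcongr)

end Transport

/-- The Cauchy–Grönwall estimate from the proof of Lemma 4.2: if
`∂_t w = -a w` on `[0, T] × V`, `S_∞[a] ≤ L` on `[0, T] × V`, and `S_∞[w](0, ·) ≤ M` on
`V`, then `S_ν[w](t, z) ≤ M e^{L t}` for every `ν`, hence also `S_∞[w](t, z) ≤ M e^{L t}`. -/
theorem taylorMajorant_gronwall_estimate
    (N m : ℕ) (hN : 1 ≤ N) (hm : 1 ≤ m)
    (T ρ : ℝ) (hT : 0 < T) (hρ : 0 < ρ)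
    (V : Set (Fin m → ℝ)) (hV : IsOpen V)
    (Ω : Set (ℝ × (Fin m → ℝ))) (hΩ : IsOpen Ω)
    (hsub : Set.Icc (0 : ℝ) T ×ˢ V ⊆ Ω)
    (a w : ℝ × (Fin m → ℝ) → Matrix (Fin N) (Fin N) ℂ)
    (ha : ContDiffOn ℝ (⊤ : ℕ∞) a Ω)
    (hw : ContDiffOn ℝ (⊤ : ℕ∞) w Ω)
    (htransport : ∀ t ∈ Set.Icc (0 : ℝ) T, ∀ z ∈ V,
      HasDerivAt (fun s : ℝ => w (s, z)) (-(a (t, z) * w (t, z))) t)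
    (L M : ℝ) (hL : 0 ≤ L) (hM : 0 ≤ M)
    (hLa : ∀ ν : ℕ, ∀ t ∈ Set.Icc (0 : ℝ) T, ∀ z ∈ V, taylorMajorant ρ ν a (t, z) ≤ L)
    (hMw : ∀ ν : ℕ, ∀ z ∈ V, taylorMajorant ρ ν w (0, z) ≤ M) :
    ∀ ν : ℕ, ∀ t ∈ Set.Icc (0 : ℝ) T, ∀ z ∈ V,
      taylorMajorant ρ ν w (t, z) ≤ M * Real.exp (L * t) := by
  intro ν t ht z hz
  have hnhds (s : ℝ) (hs : s ∈ Set.Icc 0 T) : Ω ∈ 𝓝 (s, z) := hΩ.mem_nhds (hsub ⟨hs, hz⟩)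
  refine taylorMajorant_gronwall_estimate_general hρ.le
    (fun s hs => (ha.contDiffAt (hnhds s (Set.Ioo_subset_Icc_self hs))).of_le (mod_cast le_top))
    (fun s hs => (hw.contDiffAt (hnhds s hs)).of_le (mod_cast le_top))
    (fun s hs => ?_) (fun s hs => hLa ν s (Set.Ioo_subset_Icc_self hs) z hz) (hMw ν z hz) ht
  filter_upwards [(isOpen_Ioo.prod hV).mem_nhds ⟨hs, hz⟩] with x hx
  exact htransport x.1 (Set.Ioo_subset_Icc_self hx.1) x.2 hx.2
end

section
/- Let N ≥ 1. Let W : ℝ² × ℝ² × ℝ² → Matrix (Fin N) (Fin N) ℂ be real-analytic and such that W(p, v, x) is an invertible matrix for every p, x ∈ ℝ² and every unit vector v ∈ ℝ². Let f : ℝ² → ℂ^N be continuous with support contained in the closed unit disk {x ∈ ℝ² : |x| ≤ 1}. Suppose that for every unit vector v ∈ ℝ² and every p ∈ ℝ² with ⟪p, v⟫ = 0 one has ∫_ℝ W(p, v, p + t v) · f(p + t v) dt = 0. Then f = 0. -/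
open Matrix MeasureTheory
open scoped RealInnerProductSpace

attribute [local instance] Matrix.normedAddCommGroup Matrix.normedSpace

/-!
Suppose `f ≠ 0`, and choose coordinates `(X, Y)` centred at a point of the support farthest from the
origin, in which the support lies above a parabola `X ^ 2 = κ * Y`. A line tangent to the flatter
parabola `X ^ 2 = 2 * κ * (Y - h)` meets the support only if `h ≥ 0`, and then only within distance
`O(√h)` of the chosen point. Write `φ h X a` for the value of `f` on such a line of slope `a`. Then
`∂ₐ φ = (X - κ * a) • ∂ₕ φ`, so integration by parts in `a` expresses the moments of `φ h` against
`(X - κ * a) ^ (i + 1) * a ^ j` as integrals from `0` to `h` of moments with smaller exponents.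
The moments with `i = 0` are not reached by this recursion, and this is where the vanishing of the
transform enters: once the weight is normalized to be the identity at the point of tangency
`X = κ * a`, its power series bounds the moments with `i = 0` by those with `i > 0`. An
Ovsyannikov-type iteration then forces all moments to vanish for small `h`, and the Weierstrass
approximation theorem gives `f = 0` near the chosen point, a contradiction. In dimensions above two
it suffices to restrict `f` to the planes through the origin.
-/

namespace XRay

open Set Filter Topology
open scoped ContDiff

section Hierarchy

variable {V : Type*} [NormedAddCommGroup V]

/-- The ball of radius `A` in the weighted sup norm `sup ‖u i j‖ / ρ ^ (i + j)` on double sequences.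
These norms form the scale of Banach spaces on which the moment hierarchy is solved. -/
def HasGrowth (A ρ : ℝ) (u : ℕ → ℕ → V) : Prop :=
  ∀ i j, ‖u i j‖ ≤ A * ρ ^ (i + j)

lemma HasGrowth.nonneg {A ρ : ℝ} {u : ℕ → ℕ → V} (hu : HasGrowth A ρ u) : 0 ≤ A := by
  simpa using (norm_nonneg _).trans (hu 0 0)

lemma natCast_mul_pow_pred_le {ρ η : ℝ} (hρ : 0 ≤ ρ) (hη : 0 < η) {k n : ℕ} (hkn : k ≤ n) :
    k * ρ ^ (n - 1) ≤ (ρ + η) ^ n / η := by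
  rw [le_div_iff₀ hη]
  calc k * ρ ^ (n - 1) * η ≤ n * ρ ^ (n - 1) * η := by gcongr
    _ ≤ ρ ^ n + n * ρ ^ (n - 1) * η := le_add_of_nonneg_left (by positivity)
    _ ≤ (ρ + η) ^ n := pow_add_mul_le_add_pow hρ (by positivity) n

lemma HasGrowth.of_succ_of_zero {ι : Type*} {d : ι → ℝ} {p q : ι → ℕ} {A ρ R : ℝ}
    {u : ℕ → ℕ → V} (hd : ∀ n, 0 ≤ d n) (hp : ∀ n, p n ≠ 0)
    (hsum : Summable fun n ↦ d n * R ^ (p n + q n)) (hA : 0 ≤ A) (hρ : 0 ≤ ρ) (hρR : ρ ≤ R)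
    (hsucc : ∀ i j, ‖u (i + 1) j‖ ≤ A * ρ ^ (i + 1 + j))
    (hzero : ∀ j, ‖u 0 j‖ ≤ ∑' n, d n * ‖u (p n) (q n + j)‖) :
    HasGrowth ((1 + ∑' n, d n * R ^ (p n + q n)) * A) ρ u := by
  set Q := ∑' n, d n * R ^ (p n + q n)
  have hQ : 0 ≤ Q := tsum_nonneg fun n ↦ mul_nonneg (hd n) (pow_nonneg (hρ.trans hρR) _)
  rintro (_ | i) j
  · have hterm (n) : d n * ‖u (p n) (q n + j)‖ ≤ d n * R ^ (p n + q n) * (A * ρ ^ j) := by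
      have hu : ‖u (p n) (q n + j)‖ ≤ A * ρ ^ (p n + (q n + j)) := by
        simpa only [Nat.sub_one_add_one (hp n)] using hsucc (p n - 1) (q n + j)
      calc d n * ‖u (p n) (q n + j)‖ ≤ d n * (A * ρ ^ (p n + (q n + j))) :=
            mul_le_mul_of_nonneg_left hu (hd n)
        _ = d n * ρ ^ (p n + q n) * (A * ρ ^ j) := by ring
        _ ≤ d n * R ^ (p n + q n) * (A * ρ ^ j) := by
            gcongr
            exact hd n
    have hmajorant := hsum.mul_right (A * ρ ^ j)
    have hseries := hmajorant.of_nonneg_of_le (fun n ↦ mul_nonneg (hd n) (norm_nonneg _)) hterm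
    calc ‖u 0 j‖ ≤ ∑' n, d n * ‖u (p n) (q n + j)‖ := hzero j
      _ ≤ Q * (A * ρ ^ j) := (hseries.tsum_le_tsum hterm hmajorant).trans_eq tsum_mul_right
      _ ≤ (1 + Q) * (A * ρ ^ j) := by gcongr; exact le_add_of_nonneg_left zero_le_one
      _ = (1 + Q) * A * ρ ^ (0 + j) := by rw [zero_add, mul_assoc]
  · calc ‖u (i + 1) j‖ ≤ 1 * A * ρ ^ (i + 1 + j) := by simpa only [one_mul] using hsucc i j
      _ ≤ (1 + Q) * A * ρ ^ (i + 1 + j) := by gcongr; exact le_add_of_nonneg_right hQ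

lemma natCast_mul_pow_div_factorial_le {c : ℝ} (hc : 0 ≤ c) (n : ℕ) :
    (c * n) ^ n / n.factorial ≤ (c * Real.exp 1) ^ n := by
  have hexp := Real.pow_div_factorial_le_exp (n : ℝ) n.cast_nonneg n
  rw [← mul_one (n : ℝ), Real.exp_nat_mul, mul_one] at hexp
  calc (c * n) ^ n / n.factorial = c ^ n * ((n : ℝ) ^ n / n.factorial) := by
        rw [mul_pow, mul_div_assoc]
    _ ≤ c ^ n * Real.exp 1 ^ n := by gcongr
    _ = (c * Real.exp 1) ^ n := (mul_pow _ _ _).symm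

variable [NormedSpace ℝ V]

/-- Minus the derivative `∂ₐ` acting on moments against the monomials `(X - κ a) ^ i * a ^ j`. The
truncated subtractions are harmless, since they come with a zero coefficient. -/
def lowering (κ : ℝ) (u : ℕ → ℕ → V) (i j : ℕ) : V :=
  (κ * i) • u (i - 1) j - (j : ℝ) • u i (j - 1)

lemma HasGrowth.lowering {κ A ρ η : ℝ} (hκ : 0 ≤ κ) (hρ : 0 ≤ ρ) (hη : 0 < η)
    {u : ℕ → ℕ → V} (hu : HasGrowth A ρ u) :
    HasGrowth ((1 + κ) / η * A) (ρ + η) (lowering κ u) := by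
  intro i j
  have hA := hu.nonneg
  have hleft : i * ‖u (i - 1) j‖ ≤ A * ((ρ + η) ^ (i + j) / η) := by
    rcases i with _ | i
    · simp only [CharP.cast_eq_zero, zero_mul]
      positivity
    · calc ((i + 1 : ℕ) : ℝ) * ‖u i j‖ ≤ (i + 1 : ℕ) * (A * ρ ^ (i + j)) := by gcongr; exact hu i j
        _ = A * ((i + 1 : ℕ) * ρ ^ (i + 1 + j - 1)) := by
          rw [Nat.add_right_comm, Nat.add_sub_cancel]; ring
        _ ≤ _ := by gcongr; exact natCast_mul_pow_pred_le hρ hη (Nat.le_add_right _ _)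
  have hright : j * ‖u i (j - 1)‖ ≤ A * ((ρ + η) ^ (i + j) / η) := by
    rcases j with _ | j
    · simp only [CharP.cast_eq_zero, zero_mul]
      positivity
    · calc ((j + 1 : ℕ) : ℝ) * ‖u i j‖ ≤ (j + 1 : ℕ) * (A * ρ ^ (i + j)) := by gcongr; exact hu i j
        _ = A * ((j + 1 : ℕ) * ρ ^ (i + (j + 1) - 1)) := by
          rw [← Nat.add_assoc, Nat.add_sub_cancel]; ring
        _ ≤ _ := by gcongr; exact natCast_mul_pow_pred_le hρ hη (Nat.le_add_left _ _)
  calc ‖XRay.lowering κ u i j‖ ≤ κ * (i * ‖u (i - 1) j‖) + j * ‖u i (j - 1)‖ := by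
        refine (norm_sub_le _ _).trans_eq ?_
        rw [norm_smul, norm_smul, Real.norm_of_nonneg (by positivity), Real.norm_natCast, mul_assoc]
    _ ≤ κ * (A * ((ρ + η) ^ (i + j) / η)) + A * ((ρ + η) ^ (i + j) / η) := by gcongr
    _ = (1 + κ) / η * A * (ρ + η) ^ (i + j) := by ring

lemma norm_intervalIntegral_le_of_norm_le_mul_pow {F : ℝ → V} {B h : ℝ} (hh : 0 ≤ h) (n : ℕ)
    (hF : ∀ s ∈ Ioc 0 h, ‖F s‖ ≤ B * s ^ n) :
    ‖∫ s in (0 : ℝ)..h, F s‖ ≤ B * (h ^ (n + 1) / (n + 1)) := by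
  calc ‖∫ s in (0 : ℝ)..h, F s‖ ≤ ∫ s in (0 : ℝ)..h, B * s ^ n :=
        intervalIntegral.norm_integral_le_of_norm_le hh (Eventually.of_forall hF)
          ((by fun_prop : Continuous fun s : ℝ ↦ B * s ^ n).intervalIntegrable _ _)
    _ = B * (h ^ (n + 1) / (n + 1)) := by
      rw [intervalIntegral.integral_const_mul, integral_pow, zero_pow n.succ_ne_zero, sub_zero]

/-- The evolution system satisfied by the moments `m h i j` for `h ∈ [0, δ]`: an integrated
transport equation for the rows `i + 1`, closed up by a series bound for the row `0`. -/
structure IsHierarchy {ι : Type*} (κ δ : ℝ) (d : ι → ℝ) (p q : ι → ℕ) (m : ℝ → ℕ → ℕ → V) :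
    Prop where
  succ : ∀ h ∈ Icc 0 δ, ∀ i j, m h (i + 1) j = ∫ s in (0 : ℝ)..h, lowering κ (m s) i j
  zero : ∀ h ∈ Icc 0 δ, ∀ j, ‖m h 0 j‖ ≤ ∑' n, d n * ‖m h (p n) (q n + j)‖

namespace IsHierarchy

variable {ι : Type*} {κ δ R₀ R : ℝ} {d : ι → ℝ} {p q : ι → ℕ} {m : ℝ → ℕ → ℕ → V}

lemma hasGrowth_succ (hm : IsHierarchy κ δ d p q m) (hκ : 0 ≤ κ) (hR₀ : 0 < R₀)
    (hd : ∀ n, 0 ≤ d n) (hp : ∀ n, p n ≠ 0) (hsum : Summable fun n ↦ d n * R ^ (p n + q n))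
    {B ρ η : ℝ} (hB : 0 ≤ B) (hρ : R₀ ≤ ρ) (hη : 0 < η) (hρR : ρ + η ≤ R) {n : ℕ}
    (hgrowth : ∀ h ∈ Icc 0 δ, HasGrowth (B * h ^ n) ρ (m h)) {h : ℝ} (hh : h ∈ Icc 0 δ) :
    HasGrowth ((1 + ∑' n, d n * R ^ (p n + q n)) *
      ((1 + κ) / (η * R₀) * B * (h ^ (n + 1) / (n + 1)))) (ρ + η) (m h) := by
  have hh₀ : 0 ≤ h := hh.1
  have hρ₀ : 0 ≤ ρ := hR₀.le.trans hρ
  refine .of_succ_of_zero hd hp hsum (by positivity) (by positivity) hρR (fun i j ↦ ?_)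
    (hm.zero h hh)
  have hlowering : ∀ s ∈ Ioc 0 h,
      ‖lowering κ (m s) i j‖ ≤ (1 + κ) / η * B * (ρ + η) ^ (i + j) * s ^ n := fun s hs ↦
    ((hgrowth s ⟨hs.1.le, hs.2.trans hh.2⟩).lowering hκ hρ₀ hη i j).trans_eq (by ring)
  calc ‖m h (i + 1) j‖
      ≤ (1 + κ) / η * B * (ρ + η) ^ (i + j) * (h ^ (n + 1) / (n + 1)) := by
        rw [hm.succ h hh]
        exact norm_intervalIntegral_le_of_norm_le_mul_pow hh₀ n hlowering
    _ = (1 + κ) / (η * R₀) * B * (h ^ (n + 1) / (n + 1)) * (R₀ * (ρ + η) ^ (i + j)) := by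
        field_simp
    _ ≤ (1 + κ) / (η * R₀) * B * (h ^ (n + 1) / (n + 1)) * ((ρ + η) * (ρ + η) ^ (i + j)) := by
        gcongr
        exact hρ.trans (le_add_of_nonneg_right hη.le)
    _ = _ := by ring

lemma exists_hasGrowth (hm : IsHierarchy κ δ d p q m) (hκ : 0 ≤ κ) (hR₀ : 0 < R₀) (hR : R₀ < R)
    (hd : ∀ n, 0 ≤ d n) (hp : ∀ n, p n ≠ 0) (hsum : Summable fun n ↦ d n * R ^ (p n + q n))
    {K : ℝ} (hK : 0 ≤ K) (hgrowth : ∀ h ∈ Icc 0 δ, HasGrowth K R₀ (m h)) :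
    ∃ C > 0, ∀ (n : ℕ), ∀ η > 0, R₀ + n * η ≤ R → ∀ h ∈ Icc 0 δ,
      HasGrowth (K * ((C / η) ^ n / n.factorial) * h ^ n) (R₀ + n * η) (m h) := by
  set Q := ∑' n, d n * R ^ (p n + q n) with hQ
  have hQ₀ : 0 ≤ Q := tsum_nonneg fun n ↦ mul_nonneg (hd n) (pow_nonneg (hR₀.trans hR).le _)
  refine ⟨(1 + Q) * ((1 + κ) / R₀), by positivity, fun n η hη ↦ ?_⟩
  induction n with
  | zero => simpa using fun _ ↦ hgrowth
  | succ n ih =>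
    intro hle h hh
    have hradius : R₀ + (n + 1 : ℕ) * η = R₀ + n * η + η := by push_cast; ring
    rw [hradius] at hle ⊢
    convert! hm.hasGrowth_succ hκ hR₀ hd hp hsum (by positivity)
      (le_add_of_nonneg_right (by positivity)) hη hle (ih (by linarith)) hh using 1
    rw [← hQ, Nat.factorial_succ]
    push_cast
    field_simp
    rw [pow_succ]
    field_simp

/-- An Ovsyannikov-type uniqueness argument: iterating the system `n` times, each time giving up
`1 / n` of the available radius, gains a factor `h ^ n` at the expense of `n ^ n / n! ≤ exp n`. -/
theorem exists_forall_eq_zero (hm : IsHierarchy κ δ d p q m) (hκ : 0 ≤ κ) (hδ : 0 < δ)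
    (hR₀ : 0 < R₀) (hR : R₀ < R) (hd : ∀ n, 0 ≤ d n) (hp : ∀ n, p n ≠ 0)
    (hsum : Summable fun n ↦ d n * R ^ (p n + q n))
    {K : ℝ} (hgrowth : ∀ h ∈ Icc 0 δ, HasGrowth K R₀ (m h)) :
    ∃ δ' > 0, ∀ h ∈ Icc 0 δ', m h = 0 := by
  have hK : 0 ≤ K := (hgrowth 0 ⟨le_rfl, hδ.le⟩).nonneg
  obtain ⟨C, hC, hiter⟩ := hm.exists_hasGrowth hκ hR₀ hR hd hp hsum hK hgrowth
  have hgap : 0 < R - R₀ := sub_pos.mpr hR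
  set E := C / (R - R₀) * Real.exp 1 with hE
  have hEpos : 0 < E := mul_pos (div_pos hC hgap) (Real.exp_pos 1)
  refine ⟨min δ (1 / (2 * E)), lt_min hδ (one_div_pos.mpr (mul_pos two_pos hEpos)), fun h hh ↦ ?_⟩
  have hh₀ : 0 ≤ h := hh.1
  have hsmall : E * h ≤ 1 / 2 := by
    have := hh.2.trans (min_le_right _ _)
    rw [le_div_iff₀ (by positivity)] at this
    linarith
  funext i j
  have hgeometric (n : ℕ) (hn : n ≠ 0) : ‖m h i j‖ ≤ K * R ^ (i + j) * (1 / 2) ^ n := by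
    have hradius : R₀ + n * ((R - R₀) / n) = R := by field_simp; ring
    have hbound := hiter n ((R - R₀) / n) (by positivity) hradius.le h
      ⟨hh₀, hh.2.trans (min_le_left _ _)⟩ i j
    rw [hradius] at hbound
    calc ‖m h i j‖
        ≤ K * R ^ (i + j) * ((C / (R - R₀) * h * n) ^ n / n.factorial) :=
          hbound.trans_eq (by rw [div_div_eq_mul_div]; ring)
      _ ≤ K * R ^ (i + j) * (C / (R - R₀) * h * Real.exp 1) ^ n := by
          have := hR₀.trans hR
          gcongr
          exact natCast_mul_pow_div_factorial_le (by positivity) n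
      _ = K * R ^ (i + j) * (E * h) ^ n := by rw [hE]; ring
      _ ≤ K * R ^ (i + j) * (1 / 2) ^ n := by
          have := hR₀.trans hR
          gcongr
  have hlim : Tendsto (fun n : ℕ ↦ K * R ^ (i + j) * (1 / 2 : ℝ) ^ n) atTop (𝓝 0) := by
    simpa using (tendsto_pow_atTop_nhds_zero_of_lt_one (r := (1 / 2 : ℝ)) (by norm_num)
      (by norm_num)).const_mul (K * R ^ (i + j))
  exact norm_le_zero_iff.mp <| ge_of_tendsto hlim <|
    (eventually_ne_atTop 0).mono hgeometric

end IsHierarchy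

end Hierarchy

section Moments

variable {V : Type*} [NormedAddCommGroup V] [NormedSpace ℝ V] {G : ℝ → V} {a b : ℝ}

lemma intervalIntegral_polynomial_smul_eq_zero (hG : IntervalIntegrable G volume a b) (c : ℝ)
    (hmoments : ∀ n : ℕ, ∫ x in a..b, (x - c) ^ n • G x = 0) (P : Polynomial ℝ) :
    ∫ x in a..b, P.eval x • G x = 0 := by
  have hint (Q : Polynomial ℝ) : IntervalIntegrable (fun x ↦ Q.eval (x - c) • G x) volume a b :=
    hG.continuousOn_smul (by fun_prop)
  have hcentred (Q : Polynomial ℝ) : ∫ x in a..b, Q.eval (x - c) • G x = 0 := by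
    induction Q using Polynomial.induction_on' with
    | add p q hp hq =>
      simp only [Polynomial.eval_add, add_smul]
      rw [intervalIntegral.integral_add (hint p) (hint q), hp, hq, add_zero]
    | monomial n r =>
      simp only [Polynomial.eval_monomial, mul_smul]
      rw [intervalIntegral.integral_smul, hmoments, smul_zero]
  have hshift (x : ℝ) : (P.comp (Polynomial.X + Polynomial.C c)).eval (x - c) = P.eval x := by
    simp only [Polynomial.eval_comp, Polynomial.eval_add, Polynomial.eval_X, Polynomial.eval_C,
      sub_add_cancel]
  rw [← hcentred (P.comp (Polynomial.X + Polynomial.C c))]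
  simp only [hshift]

lemma intervalIntegral_smul_eq_zero_of_moments (hab : a ≤ b)
    (hG : IntervalIntegrable G volume a b) (c : ℝ)
    (hmoments : ∀ n : ℕ, ∫ x in a..b, (x - c) ^ n • G x = 0) {φ : ℝ → ℝ}
    (hφ : ContinuousOn φ (Icc a b)) :
    ∫ x in a..b, φ x • G x = 0 := by
  have hbound (ε : ℝ) (hε : 0 < ε) :
      ‖∫ x in a..b, φ x • G x‖ ≤ ε * ∫ x in a..b, ‖G x‖ := by
    obtain ⟨P, hP⟩ := exists_polynomial_near_of_continuousOn a b φ hφ ε hε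
    have hφG : IntervalIntegrable (fun x ↦ φ x • G x) volume a b :=
      hG.continuousOn_smul (by rwa [uIcc_of_le hab])
    have hPG : IntervalIntegrable (fun x ↦ P.eval x • G x) volume a b :=
      hG.continuousOn_smul P.continuous.continuousOn
    calc ‖∫ x in a..b, φ x • G x‖
        = ‖∫ x in a..b, (φ x - P.eval x) • G x‖ := by
          simp only [sub_smul]
          rw [intervalIntegral.integral_sub hφG hPG,
            intervalIntegral_polynomial_smul_eq_zero hG c hmoments P, sub_zero]
      _ ≤ ∫ x in a..b, ε * ‖G x‖ := by
          refine intervalIntegral.norm_integral_le_of_norm_le hab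
            (Eventually.of_forall fun x hx ↦ ?_) (hG.norm.const_mul ε)
          rw [norm_smul, norm_sub_rev]
          gcongr
          exact (hP x (Ioc_subset_Icc_self hx)).le
      _ = ε * ∫ x in a..b, ‖G x‖ := intervalIntegral.integral_const_mul _ _
  have hlim : Tendsto (fun ε ↦ ε * ∫ x in a..b, ‖G x‖) (𝓝[>] 0) (𝓝 0) := by
    simpa using (tendsto_id.mul_const (∫ x in a..b, ‖G x‖)).mono_left
      (nhdsWithin_le_nhds (a := (0 : ℝ)) (s := Ioi 0))
  exact norm_le_zero_iff.mp <| ge_of_tendsto hlim <|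
    eventually_mem_nhdsWithin.mono hbound

lemma eqOn_zero_of_intervalIntegral_pow_smul_eq_zero [CompleteSpace V] (hab : a < b)
    (hG : ContinuousOn G (Icc a b)) (c : ℝ)
    (hmoments : ∀ n : ℕ, ∫ x in a..b, (x - c) ^ n • G x = 0) :
    EqOn G 0 (Icc a b) := by
  intro y hy
  have hGint : IntervalIntegrable G volume a b := hG.intervalIntegrable_of_Icc hab.le
  refine SeparatingDual.eq_zero_of_forall_dual_eq_zero (R := ℝ) fun ℓ ↦ ?_
  have hℓG : ContinuousOn (fun x ↦ ℓ (G x)) (Icc a b) := ℓ.continuous.comp_continuousOn hG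
  have hsq : ∫ x in a..b, ℓ (G x) ^ 2 = 0 := by
    have hpairing := ℓ.intervalIntegral_comp_comm
      (hGint.continuousOn_smul (f := fun x ↦ ℓ (G x)) (by rwa [uIcc_of_le hab.le]))
    rw [intervalIntegral_smul_eq_zero_of_moments hab.le hGint c hmoments hℓG, map_zero] at hpairing
    simpa only [map_smul, smul_eq_mul, ← sq] using hpairing
  by_contra hne
  exact (intervalIntegral.integral_pos hab (hℓG.pow 2) (fun x _ ↦ sq_nonneg _)
    ⟨y, hy, sq_pos_of_ne_zero hne⟩).ne' hsq

end Moments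

section Box

variable {V : Type*} [NormedAddCommGroup V] [NormedSpace ℝ V] {F : ℝ × ℝ → V} {p q : ℝ × ℝ}

lemma setIntegral_Icc_prod_eq_intervalIntegral (hpq : p ≤ q) (hF : ContinuousOn F (Icc p q)) :
    ∫ z in Icc p q, F z = ∫ x in p.1..q.1, ∫ y in p.2..q.2, F (x, y) := by
  have hint := hF.integrableOn_compact (μ := volume) isCompact_Icc
  rw [← Prod.mk.eta (p := p), ← Prod.mk.eta (p := q), ← Icc_prod_Icc,
    Measure.volume_eq_prod] at hint ⊢
  rw [setIntegral_prod _ hint]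
  simp only [intervalIntegral.integral_of_le hpq.1, intervalIntegral.integral_of_le hpq.2,
    integral_Icc_eq_integral_Ioc]

lemma setIntegral_Icc_prod_eq_intervalIntegral_swap (hpq : p ≤ q)
    (hF : ContinuousOn F (Icc p q)) :
    ∫ z in Icc p q, F z = ∫ y in p.2..q.2, ∫ x in p.1..q.1, F (x, y) := by
  rw [setIntegral_Icc_prod_eq_intervalIntegral hpq hF]
  refine intervalIntegral_intervalIntegral_swap ?_
  have hint := hF.integrableOn_compact (μ := volume) isCompact_Icc
  rw [← Prod.mk.eta (p := p), ← Prod.mk.eta (p := q), ← Icc_prod_Icc] at hint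
  exact hint.mono_set <| prod_mono (by rw [uIoc_of_le hpq.1]; exact Ioc_subset_Icc_self)
    (by rw [uIoc_of_le hpq.2]; exact Ioc_subset_Icc_self)

lemma setIntegral_Icc_smul_eq_zero_of_intervalIntegral_eq_zero (hpq : p ≤ q) (hF : Continuous F)
    {w : ℝ → ℝ} (hw : Continuous w) (hzero : ∀ y, ∫ x in p.1..q.1, F (x, y) = 0) :
    ∫ z in Icc p q, w z.2 • F z = 0 := by
  rw [setIntegral_Icc_prod_eq_intervalIntegral_swap hpq (by fun_prop)]
  simp only [intervalIntegral.integral_smul, hzero, smul_zero, intervalIntegral.integral_zero]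

lemma intervalIntegral_setIntegral_swap {X : Type*} [TopologicalSpace X] [T2Space X]
    [MeasurableSpace X] [OpensMeasurableSpace X]
    {μ : Measure X} [SFinite μ] [IsFiniteMeasureOnCompacts μ] {s : Set X} (hs : IsCompact s)
    {G : ℝ → X → V} (hG : Continuous (Function.uncurry G)) (a b : ℝ) :
    ∫ t in a..b, ∫ x in s, G t x ∂μ = ∫ x in s, (∫ t in a..b, G t x) ∂μ := by
  refine intervalIntegral_integral_swap ?_
  rw [Measure.prod_restrict]
  exact (hG.continuousOn.integrableOn_compact (isCompact_uIcc.prod hs)).mono_set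
    (prod_mono uIoc_subset_uIcc Subset.rfl)

end Box

section Tangent

variable {V : Type*} [NormedAddCommGroup V]

/-- The value of `g`, at abscissa `X`, on the line of slope `a` tangent to the parabola
`Y = h + X ^ 2 / (2 * κ)`; the point of tangency is at `X = κ * a`. -/
noncomputable def alongTangent (κ : ℝ) (g : ℝ × ℝ → V) (h X a : ℝ) : V :=
  g (X, h - κ * a ^ 2 / 2 + a * X)

/-- The monomials in the signed distance `X - κ * a` to the point of tangency and the slope `a`. -/
def tangentMonomial (κ X a : ℝ) (i j : ℕ) : ℝ :=
  (X - κ * a) ^ i * a ^ j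

variable {κ h X a : ℝ} {g : ℝ × ℝ → V}

@[fun_prop]
lemma continuous_alongTangent (hg : Continuous g) {T : Type*} [TopologicalSpace T] {u v w : T → ℝ}
    (hu : Continuous u) (hv : Continuous v) (hw : Continuous w) :
    Continuous fun t ↦ alongTangent κ g (u t) (v t) (w t) :=
  hg.comp (by fun_prop : Continuous fun t ↦ (v t, u t - κ * w t ^ 2 / 2 + w t * v t))

@[fun_prop]
lemma continuous_tangentMonomial {T : Type*} [TopologicalSpace T] {v w : T → ℝ}
    (hv : Continuous v) (hw : Continuous w) (i j : ℕ) :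
    Continuous fun t ↦ tangentMonomial κ (v t) (w t) i j := by
  unfold tangentMonomial
  fun_prop

lemma bounds_of_alongTangent_ne_zero (hκ : 0 < κ) (hsupp : ∀ z, g z ≠ 0 → z.1 ^ 2 ≤ κ * z.2)
    (hne : alongTangent κ g h X a ≠ 0) : X ^ 2 ≤ 2 * κ * h ∧ κ * a ^ 2 ≤ 4 * h := by
  have hregion : X ^ 2 ≤ κ * (h - κ * a ^ 2 / 2 + a * X) := hsupp _ hne
  constructor
  · nlinarith [sq_nonneg (X - κ * a)]
  · refine le_of_mul_le_mul_left ?_ hκ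
    nlinarith [sq_nonneg (2 * X - κ * a)]

variable [NormedSpace ℝ V]

lemma sub_mul_smul_alongTangent_zero (hκ : 0 < κ) (hsupp : ∀ z, g z ≠ 0 → z.1 ^ 2 ≤ κ * z.2) :
    (X - κ * a) • alongTangent κ g 0 X a = 0 := by
  by_cases hne : alongTangent κ g 0 X a = 0
  · rw [hne, smul_zero]
  · obtain ⟨hX, ha⟩ := bounds_of_alongTangent_ne_zero hκ hsupp hne
    have hX₀ : X = 0 := sq_nonpos_iff X |>.mp (by linarith)
    have ha₀ : a = 0 := sq_nonpos_iff a |>.mp (nonpos_of_mul_nonpos_right (by linarith) hκ)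
    rw [hX₀, ha₀, mul_zero, sub_zero, zero_smul]

/-- The transport equation `∂ₐ φ = (X - κ * a) • ∂ₕ φ` for `φ = alongTangent κ g`, integrated in `h`
since `g` is merely continuous. -/
lemma hasDerivAt_integral_alongTangent [CompleteSpace V] (hg : Continuous g) (κ h X a : ℝ) :
    HasDerivAt (fun a ↦ ∫ s in (0 : ℝ)..h, alongTangent κ g s X a)
      ((X - κ * a) • (alongTangent κ g h X a - alongTangent κ g 0 X a)) a := by
  set θ : ℝ → ℝ := fun a ↦ a * X - κ * a ^ 2 / 2 with hθ
  set G : ℝ → V := fun Y ↦ ∫ y in (0 : ℝ)..Y, g (X, y) with hG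
  have hgX : Continuous fun y ↦ g (X, y) := by fun_prop
  have hθ' : HasDerivAt θ (X - κ * a) a := by
    convert! ((hasDerivAt_id a).mul_const X).sub
      ((((hasDerivAt_id a).pow 2).const_mul κ).div_const 2) using 1
    simp only [id_eq, Nat.cast_ofNat]
    ring
  have hG' (Y : ℝ) : HasDerivAt G (g (X, Y)) Y := (hgX.integral_hasStrictDerivAt 0 Y).hasDerivAt
  have hφ (s a : ℝ) : alongTangent κ g s X a = g (X, s + θ a) := by
    rw [alongTangent, hθ]
    ring_nf
  have hprimitive : (fun a ↦ ∫ s in (0 : ℝ)..h, alongTangent κ g s X a) =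
      fun a ↦ G (h + θ a) - G (θ a) := by
    funext a
    simp only [hφ, hG]
    rw [intervalIntegral.integral_comp_add_right (fun y ↦ g (X, y)), zero_add,
      intervalIntegral.integral_interval_sub_left (hgX.intervalIntegrable _ _)
        (hgX.intervalIntegrable _ _)]
  rw [hprimitive, hφ, hφ, zero_add, smul_sub]
  exact ((hG' _).scomp a (hθ'.const_add h)).sub ((hG' _).scomp a hθ')

lemma hasDerivAt_tangentMonomial (κ X a : ℝ) (i j : ℕ) :
    HasDerivAt (fun a ↦ tangentMonomial κ X a i j) (-lowering κ (tangentMonomial κ X a) i j) a := by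
  have hlinear : HasDerivAt (fun a ↦ X - κ * a) (-(κ * 1)) a :=
    ((hasDerivAt_id a).const_mul κ).const_sub X
  convert! (hlinear.pow i).mul ((hasDerivAt_id a).pow j) using 1
  simp only [lowering, tangentMonomial, smul_eq_mul, Pi.pow_apply, id_eq]
  ring

lemma intervalIntegral_alongTangent_eq_zero (hκ : 0 < κ)
    (hsupp : ∀ z, g z ≠ 0 → z.1 ^ 2 ≤ κ * z.2) (hh : 0 ≤ h) (ha : 4 * h < κ * a ^ 2) :
    ∫ s in (0 : ℝ)..h, alongTangent κ g s X a = 0 := by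
  refine intervalIntegral.integral_zero_ae (Eventually.of_forall fun s hs ↦ ?_)
  rw [uIoc_of_le hh] at hs
  by_contra hne
  linarith [(bounds_of_alongTangent_ne_zero hκ hsupp hne).2, hs.2]

lemma intervalIntegral_tangentMonomial_succ_smul_alongTangent [CompleteSpace V] (hκ : 0 < κ)
    (hg : Continuous g) (hsupp : ∀ z, g z ≠ 0 → z.1 ^ 2 ≤ κ * z.2) (hh : 0 ≤ h) (hhκ : 4 * h < κ)
    (X : ℝ) (i j : ℕ) :
    ∫ a in (-1 : ℝ)..1, tangentMonomial κ X a (i + 1) j • alongTangent κ g h X a =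
      ∫ a in (-1 : ℝ)..1, lowering κ (tangentMonomial κ X a) i j •
        ∫ s in (0 : ℝ)..h, alongTangent κ g s X a := by
  have hparts := intervalIntegral.integral_smul_deriv_eq_deriv_smul (a := -1) (b := 1)
    (fun a _ ↦ hasDerivAt_tangentMonomial κ X a i j)
    (fun a _ ↦ hasDerivAt_integral_alongTangent hg κ h X a)
    ((by unfold lowering; fun_prop :
      Continuous fun a ↦ -lowering κ (tangentMonomial κ X a) i j).intervalIntegrable _ _)
    ((by fun_prop : Continuous fun a ↦ (X - κ * a) •
      (alongTangent κ g h X a - alongTangent κ g 0 X a)).intervalIntegrable _ _)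
  have hend (a : ℝ) (ha : a ^ 2 = 1) : ∫ s in (0 : ℝ)..h, alongTangent κ g s X a = 0 :=
    intervalIntegral_alongTangent_eq_zero hκ hsupp hh (by rwa [ha, mul_one])
  simp only [hend 1 (one_pow 2), hend (-1) neg_one_sq, smul_zero, sub_zero, zero_sub, neg_smul,
    intervalIntegral.integral_neg, neg_neg] at hparts
  rw [← hparts]
  congr 1 with a
  rw [smul_sub, sub_mul_smul_alongTangent_zero hκ hsupp, sub_zero, smul_smul]
  congr 1
  rw [tangentMonomial, tangentMonomial]
  ring

/-- The moments, over the square `[-1, 1] × [-1, 1]`, of `g` on the tangent lines of the parabola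
`Y = h + X ^ 2 / (2 * κ)`, against the monomials `tangentMonomial κ`. -/
noncomputable def moment (κ : ℝ) (g : ℝ × ℝ → V) (h : ℝ) (i j : ℕ) : V :=
  ∫ z in Icc (-1 : ℝ × ℝ) 1, tangentMonomial κ z.1 z.2 i j • alongTangent κ g h z.1 z.2

lemma lowering_moment (hg : Continuous g) (κ h : ℝ) (i j : ℕ) :
    lowering κ (moment κ g h) i j = ∫ z in Icc (-1 : ℝ × ℝ) 1,
      lowering κ (tangentMonomial κ z.1 z.2) i j • alongTangent κ g h z.1 z.2 := by
  have hint (i j : ℕ) (r : ℝ) : IntegrableOn (fun z : ℝ × ℝ ↦ r •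
      tangentMonomial κ z.1 z.2 i j • alongTangent κ g h z.1 z.2) (Icc (-1 : ℝ × ℝ) 1) :=
    (by fun_prop : Continuous _).continuousOn.integrableOn_compact isCompact_Icc
  simp only [lowering, moment, sub_smul, smul_assoc]
  rw [integral_sub (hint _ _ _) (hint _ _ _), integral_smul, integral_smul]

theorem moment_succ [CompleteSpace V] (hκ : 0 < κ)
    (hg : Continuous g) (hsupp : ∀ z, g z ≠ 0 → z.1 ^ 2 ≤ κ * z.2) (hh : 0 ≤ h) (hhκ : 4 * h < κ)
    (i j : ℕ) :
    moment κ g h (i + 1) j = ∫ s in (0 : ℝ)..h, lowering κ (moment κ g s) i j := by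
  have hcont : Continuous fun w : ℝ × ℝ × ℝ ↦
      lowering κ (tangentMonomial κ w.2.1 w.2.2) i j • alongTangent κ g w.1 w.2.1 w.2.2 := by
    unfold lowering
    fun_prop
  have hprimitive : Continuous fun z : ℝ × ℝ ↦ ∫ s in (0 : ℝ)..h,
      lowering κ (tangentMonomial κ z.1 z.2) i j • alongTangent κ g s z.1 z.2 :=
    intervalIntegral.continuous_parametric_intervalIntegral_of_continuous'
      (by unfold Function.uncurry lowering; fun_prop) 0 h
  calc moment κ g h (i + 1) j
      = ∫ X in (-1 : ℝ)..1, ∫ a in (-1 : ℝ)..1,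
          tangentMonomial κ X a (i + 1) j • alongTangent κ g h X a :=
        setIntegral_Icc_prod_eq_intervalIntegral (neg_le_self zero_le_one)
          (by fun_prop : Continuous _).continuousOn
    _ = ∫ X in (-1 : ℝ)..1, ∫ a in (-1 : ℝ)..1, ∫ s in (0 : ℝ)..h,
          lowering κ (tangentMonomial κ X a) i j • alongTangent κ g s X a := by
        simp only [intervalIntegral_tangentMonomial_succ_smul_alongTangent hκ hg hsupp hh hhκ,
          intervalIntegral.integral_smul]
    _ = ∫ z in Icc (-1 : ℝ × ℝ) 1, ∫ s in (0 : ℝ)..h,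
          lowering κ (tangentMonomial κ z.1 z.2) i j • alongTangent κ g s z.1 z.2 :=
        (setIntegral_Icc_prod_eq_intervalIntegral (neg_le_self zero_le_one)
          hprimitive.continuousOn).symm
    _ = ∫ s in (0 : ℝ)..h, ∫ z in Icc (-1 : ℝ × ℝ) 1,
          lowering κ (tangentMonomial κ z.1 z.2) i j • alongTangent κ g s z.1 z.2 :=
        (intervalIntegral_setIntegral_swap isCompact_Icc hcont 0 h).symm
    _ = ∫ s in (0 : ℝ)..h, lowering κ (moment κ g s) i j := by
        simp only [lowering_moment hg]

lemma norm_tangentMonomial_smul_alongTangent_le {R : ℝ} (hR : 0 ≤ R)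
    (hbounds : ∀ X a, alongTangent κ g h X a ≠ 0 → |X - κ * a| ≤ R ∧ |a| ≤ R) (X a : ℝ) (i j : ℕ) :
    ‖tangentMonomial κ X a i j • alongTangent κ g h X a‖ ≤
      R ^ (i + j) * ‖alongTangent κ g h X a‖ := by
  by_cases hne : alongTangent κ g h X a = 0
  · rw [hne, smul_zero, norm_zero, mul_zero]
  · obtain ⟨hX, ha⟩ := hbounds _ _ hne
    rw [norm_smul, tangentMonomial, Real.norm_eq_abs, abs_mul, abs_pow, abs_pow, pow_add]
    gcongr

lemma hasGrowth_moment {M R : ℝ} (hR : 0 ≤ R)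
    (hM : ∀ z ∈ Icc (-1 : ℝ × ℝ) 1, ‖alongTangent κ g h z.1 z.2‖ ≤ M)
    (hbounds : ∀ X a, alongTangent κ g h X a ≠ 0 → |X - κ * a| ≤ R ∧ |a| ≤ R) :
    HasGrowth (M * volume.real (Icc (-1 : ℝ × ℝ) 1)) R (moment κ g h) := by
  intro i j
  rw [mul_right_comm]
  refine norm_setIntegral_le_of_norm_le_const isCompact_Icc.measure_lt_top fun z hz ↦ ?_
  calc ‖tangentMonomial κ z.1 z.2 i j • alongTangent κ g h z.1 z.2‖
      ≤ R ^ (i + j) * ‖alongTangent κ g h z.1 z.2‖ :=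
        norm_tangentMonomial_smul_alongTangent_le hR hbounds _ _ _ _
    _ ≤ M * R ^ (i + j) := by
        rw [mul_comm]
        gcongr
        exact hM z hz

section Rays

variable {ι : Type*} {c : ι → V →L[ℝ] V} {d : ι → ℝ} {p q : ι → ℕ} {R : ℝ}
  {U : ℝ → ℝ → V →L[ℝ] V}

lemma hasSum_setIntegral_pow_smul [Countable ι] (hg : Continuous g) (hR : 0 ≤ R)
    (hbounds : ∀ X a, alongTangent κ g h X a ≠ 0 → |X - κ * a| ≤ R ∧ |a| ≤ R)
    (hsum : Summable fun n ↦ ‖c n‖ * R ^ (p n + q n))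
    (hU : ∀ t a, |t| ≤ R → |a| ≤ R → HasSum (fun n ↦ (t ^ p n * a ^ q n) • c n) (U t a - 1))
    (j : ℕ) :
    HasSum (fun n ↦ ∫ z in Icc (-1 : ℝ × ℝ) 1, z.2 ^ j •
        c n (tangentMonomial κ z.1 z.2 (p n) (q n) • alongTangent κ g h z.1 z.2))
      (∫ z in Icc (-1 : ℝ × ℝ) 1, z.2 ^ j • (U (z.1 - κ * z.2) z.2 (alongTangent κ g h z.1 z.2) -
        alongTangent κ g h z.1 z.2)) := by
  set φ : ℝ × ℝ → V := fun z ↦ alongTangent κ g h z.1 z.2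
  have hφcont : Continuous φ := by fun_prop
  obtain ⟨M, hM⟩ := isCompact_Icc.exists_bound_of_continuousOn hφcont.continuousOn (s := Icc (-1) 1)
  set F : ι → ℝ × ℝ → V :=
    fun n z ↦ z.2 ^ j • c n (tangentMonomial κ z.1 z.2 (p n) (q n) • φ z) with hF
  have hbound (n : ι) : ∀ z ∈ Icc (-1 : ℝ × ℝ) 1, ‖F n z‖ ≤ ‖c n‖ * R ^ (p n + q n) * M := by
    intro z hz
    have haj : ‖z.2 ^ j‖ ≤ 1 := by
      rw [norm_pow]
      exact pow_le_one₀ (norm_nonneg _) (abs_le.mpr ⟨hz.1.2, hz.2.2⟩)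
    calc ‖F n z‖ ≤ ‖z.2 ^ j‖ * (‖c n‖ * ‖tangentMonomial κ z.1 z.2 (p n) (q n) • φ z‖) := by
          rw [hF, norm_smul]
          gcongr
          exact (c n).le_opNorm _
      _ ≤ 1 * (‖c n‖ * (R ^ (p n + q n) * ‖φ z‖)) := by
          gcongr
          exact norm_tangentMonomial_smul_alongTangent_le hR hbounds _ _ _ _
      _ ≤ ‖c n‖ * R ^ (p n + q n) * M := by
          rw [one_mul, mul_assoc]
          gcongr
          exact hM z hz
  have hpointwise (z : ℝ × ℝ) :
      HasSum (fun n ↦ F n z) (z.2 ^ j • (U (z.1 - κ * z.2) z.2 (φ z) - φ z)) := by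
    refine HasSum.const_smul _ ?_
    by_cases hne : φ z = 0
    · simpa only [hne, smul_zero, map_zero, sub_zero] using hasSum_zero
    · obtain ⟨ht, ha⟩ := hbounds _ _ hne
      simp only [map_smul]
      exact (hU _ _ ht ha).mapL (ContinuousLinearMap.apply ℝ V (φ z))
  exact hasSum_integral_of_dominated_convergence (fun n _ ↦ ‖c n‖ * R ^ (p n + q n) * M)
    (fun n ↦ (by fun_prop : Continuous (F n)).aestronglyMeasurable)
    (fun n ↦ (ae_restrict_iff' measurableSet_Icc).mpr (Eventually.of_forall (hbound n)))
    (Eventually.of_forall fun _ ↦ hsum.mul_right M)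
    (integrableOn_const isCompact_Icc.measure_ne_top)
    (Eventually.of_forall hpointwise)

lemma hasSum_moment [CompleteSpace V] [Countable ι] (hg : Continuous g) (hR : 0 ≤ R)
    (hbounds : ∀ X a, alongTangent κ g h X a ≠ 0 → |X - κ * a| ≤ R ∧ |a| ≤ R)
    (hsum : Summable fun n ↦ ‖c n‖ * R ^ (p n + q n))
    (hU : ∀ t a, |t| ≤ R → |a| ≤ R → HasSum (fun n ↦ (t ^ p n * a ^ q n) • c n) (U t a - 1))
    (hcont : Continuous fun z : ℝ × ℝ ↦ U (z.1 - κ * z.2) z.2 (alongTangent κ g h z.1 z.2))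
    (hray : ∀ a, ∫ X in (-1 : ℝ)..1, U (X - κ * a) a (alongTangent κ g h X a) = 0) (j : ℕ) :
    HasSum (fun n ↦ c n (moment κ g h (p n) (q n + j))) (-moment κ g h 0 j) := by
  have hint (v : ℝ × ℝ → V) (hv : Continuous v) : IntegrableOn v (Icc (-1 : ℝ × ℝ) 1) :=
    hv.continuousOn.integrableOn_compact isCompact_Icc
  convert! hasSum_setIntegral_pow_smul hg hR hbounds hsum hU j using 1
  · funext n
    rw [moment, ← (c n).integral_comp_comm (hint _ (by fun_prop))]
    congr 1 with z
    rw [← map_smul, smul_smul, tangentMonomial, tangentMonomial]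
    ring_nf
  · have hWint : IntegrableOn (fun z : ℝ × ℝ ↦
        z.2 ^ j • U (z.1 - κ * z.2) z.2 (alongTangent κ g h z.1 z.2)) (Icc (-1) 1) :=
      hint _ (.smul (by fun_prop) hcont)
    have hφint : IntegrableOn (fun z : ℝ × ℝ ↦ z.2 ^ j • alongTangent κ g h z.1 z.2)
        (Icc (-1) 1) := hint _ (by fun_prop)
    have hWzero : ∫ z in Icc (-1 : ℝ × ℝ) 1,
        z.2 ^ j • U (z.1 - κ * z.2) z.2 (alongTangent κ g h z.1 z.2) = 0 :=
      setIntegral_Icc_smul_eq_zero_of_intervalIntegral_eq_zero (p := (-1 : ℝ × ℝ)) (q := 1)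
        (F := fun z ↦ U (z.1 - κ * z.2) z.2 (alongTangent κ g h z.1 z.2)) (w := (· ^ j))
        (neg_le_self zero_le_one) hcont (by fun_prop) hray
    simp only [smul_sub]
    rw [integral_sub hWint hφint, hWzero, zero_sub]
    simp only [moment, tangentMonomial, pow_zero, one_mul]

lemma norm_moment_zero_le [CompleteSpace V] [Countable ι] (hg : Continuous g) (hR : 0 ≤ R)
    (hbounds : ∀ X a, alongTangent κ g h X a ≠ 0 → |X - κ * a| ≤ R ∧ |a| ≤ R)
    (hcd : ∀ n, ‖c n‖ ≤ d n) (hsum : Summable fun n ↦ d n * R ^ (p n + q n))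
    (hU : ∀ t a, |t| ≤ R → |a| ≤ R → HasSum (fun n ↦ (t ^ p n * a ^ q n) • c n) (U t a - 1))
    (hcont : Continuous fun z : ℝ × ℝ ↦ U (z.1 - κ * z.2) z.2 (alongTangent κ g h z.1 z.2))
    (hray : ∀ a, ∫ X in (-1 : ℝ)..1, U (X - κ * a) a (alongTangent κ g h X a) = 0) (j : ℕ) :
    ‖moment κ g h 0 j‖ ≤ ∑' n, d n * ‖moment κ g h (p n) (q n + j)‖ := by
  have hφcont : Continuous fun z : ℝ × ℝ ↦ alongTangent κ g h z.1 z.2 := by fun_prop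
  obtain ⟨M, hM⟩ := isCompact_Icc.exists_bound_of_continuousOn hφcont.continuousOn (s := Icc (-1) 1)
  have hgrowth := hasGrowth_moment hR hM hbounds
  set K := M * volume.real (Icc (-1 : ℝ × ℝ) 1)
  have hd (n : ι) : 0 ≤ d n := (norm_nonneg _).trans (hcd n)
  have hmoments : Summable fun n ↦ d n * ‖moment κ g h (p n) (q n + j)‖ := by
    refine (hsum.mul_right (K * R ^ j)).of_nonneg_of_le
      (fun n ↦ mul_nonneg (hd n) (norm_nonneg _)) fun n ↦ ?_
    calc d n * ‖moment κ g h (p n) (q n + j)‖ ≤ d n * (K * R ^ (p n + (q n + j))) :=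
          mul_le_mul_of_nonneg_left (hgrowth _ _) (hd n)
      _ = d n * R ^ (p n + q n) * (K * R ^ j) := by ring
  have hcsum : Summable fun n ↦ ‖c n‖ * R ^ (p n + q n) :=
    hsum.of_nonneg_of_le (fun n ↦ by positivity) fun n ↦ by gcongr; exact hcd n
  have hseries := hasSum_moment hg hR hbounds hcsum hU hcont hray j
  simpa only [norm_neg] using hseries.norm_le_of_bounded hmoments.hasSum fun n ↦
    ((c n).le_opNorm _).trans (mul_le_mul_of_nonneg_right (hcd n) (norm_nonneg _))

end Rays

lemma alongTangent_eq_zero_of_moment_eq_zero [CompleteSpace V] (hg : Continuous g)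
    (hmoment : moment κ g h = 0) (hX : X ∈ Icc (-1) 1) (ha : a ∈ Icc (-1) 1) :
    alongTangent κ g h X a = 0 := by
  have hslope (i : ℕ) : EqOn (fun a ↦ ∫ X in (-1 : ℝ)..1, (X - κ * a) ^ i • alongTangent κ g h X a)
      0 (Icc (-1) 1) := by
    refine eqOn_zero_of_intervalIntegral_pow_smul_eq_zero (neg_lt_self one_pos)
      (intervalIntegral.continuous_parametric_intervalIntegral_of_continuous'
        (by unfold Function.uncurry; fun_prop) _ _).continuousOn 0 fun j ↦ ?_
    calc ∫ a in (-1 : ℝ)..1, (a - 0) ^ j •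
          ∫ X in (-1 : ℝ)..1, (X - κ * a) ^ i • alongTangent κ g h X a
        = ∫ a in (-1 : ℝ)..1, ∫ X in (-1 : ℝ)..1,
            tangentMonomial κ X a i j • alongTangent κ g h X a := by
          simp only [sub_zero, ← intervalIntegral.integral_smul, smul_smul, tangentMonomial,
            mul_comm]
      _ = moment κ g h i j := (setIntegral_Icc_prod_eq_intervalIntegral_swap
            (F := fun z ↦ tangentMonomial κ z.1 z.2 i j • alongTangent κ g h z.1 z.2)
            (neg_le_self zero_le_one) (by fun_prop)).symm
      _ = 0 := congrFun₂ hmoment i j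
  exact eqOn_zero_of_intervalIntegral_pow_smul_eq_zero (neg_lt_self one_pos)
    (by fun_prop : Continuous fun X ↦ alongTangent κ g h X a).continuousOn (κ * a)
    (fun i ↦ hslope i ha) hX

end Tangent

section Expansion

variable {E : Type*} [NormedAddCommGroup E] [NormedSpace ℝ E]

lemma multilinear_const_eq_sum {ι : Type*} [Fintype ι] [DecidableEq ι] {n : ℕ}
    (P : (ι → ℝ) [×n]→L[ℝ] E) (z : ι → ℝ) :
    P (fun _ ↦ z) = ∑ x : Fin n → ι, (∏ k, z (x k)) • P fun k ↦ Pi.single (x k) 1 := by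
  have hz : z = ∑ i, z i • (Pi.single i 1 : ι → ℝ) := pi_eq_sum_univ' z
  conv_lhs => rw [hz]
  rw [ContinuousMultilinearMap.map_sum]
  simp only [ContinuousMultilinearMap.map_smul_univ]

lemma summable_sigma_norm_mul_pow {ι : Type*} [Fintype ι]
    (P : FormalMultilinearSeries ℝ (ι → ℝ) E) {R : ℝ} (hR : 0 ≤ R)
    (hsum : Summable fun n ↦ ‖P n‖ * (Fintype.card ι * R) ^ n) :
    Summable fun x : Σ n, Fin n → ι ↦ ‖P x.1‖ * R ^ x.1 := by
  rw [summable_sigma_of_nonneg fun x ↦ by positivity]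
  refine ⟨fun n ↦ .of_finite, hsum.congr fun n ↦ ?_⟩
  calc ‖P n‖ * (Fintype.card ι * R) ^ n = Fintype.card (Fin n → ι) • (‖P n‖ * R ^ n) := by
        rw [Fintype.card_fun, Fintype.card_fin, nsmul_eq_mul, Nat.cast_pow, mul_pow]
        ring
    _ = ∑' _ : Fin n → ι, ‖P n‖ * R ^ n := by
        rw [tsum_fintype, Finset.sum_const, Finset.card_univ]

lemma exists_hasSum_words_of_analyticAt [CompleteSpace E] {ι : Type*} [Fintype ι] [Nonempty ι]
    {U : (ι → ℝ) → E} (hU : AnalyticAt ℝ U 0) :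
    ∃ R > 0, ∃ c : (Σ n, Fin n → ι) → E, (Summable fun x ↦ ‖c x‖ * R ^ x.1) ∧
      ∀ z, (∀ i, |z i| ≤ R) → HasSum (fun x ↦ (∏ k, z (x.2 k)) • c x) (U z) := by
  classical
  obtain ⟨P, r, hP⟩ := hU
  obtain ⟨r', hr', hr'r⟩ := ENNReal.lt_iff_exists_nnreal_btwn.mp hP.r_pos
  set R : ℝ := r' / Fintype.card ι
  have hr'pos : (0 : ℝ) < r' := mod_cast hr'
  have hRpos : 0 < R := by positivity
  have hcardR : Fintype.card ι * R = r' := mul_div_cancel₀ _ (by positivity)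
  have hRr' : R ≤ r' := div_le_self hr'pos.le (mod_cast Fintype.card_pos)
  have hnorm (x : Σ n, Fin n → ι) : ‖P x.1 fun k ↦ Pi.single (x.2 k) 1‖ ≤ ‖P x.1‖ := by
    simpa only [Pi.norm_single, norm_one, Finset.prod_const_one, mul_one]
      using (P x.1).le_opNorm fun k ↦ Pi.single (x.2 k) 1
  have hPsum : Summable fun x : Σ n, Fin n → ι ↦ ‖P x.1‖ * R ^ x.1 :=
    summable_sigma_norm_mul_pow P hRpos.le <| by
      simpa only [hcardR] using P.summable_norm_mul_pow (hr'r.trans_le hP.r_le)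
  have hsum : Summable fun x : Σ n, Fin n → ι ↦
      ‖P x.1 fun k ↦ Pi.single (x.2 k) 1‖ * R ^ x.1 :=
    hPsum.of_nonneg_of_le (fun x ↦ by positivity) fun x ↦ by gcongr; exact hnorm x
  refine ⟨R, hRpos, fun x ↦ P x.1 fun k ↦ Pi.single (x.2 k) 1, hsum, fun z hz ↦ ?_⟩
  have hzr : z ∈ Metric.eball (0 : ι → ℝ) r := by
    have hz' : ‖z‖₊ ≤ r' := (pi_norm_le_iff_of_nonneg hr'pos.le).mpr fun i ↦ (hz i).trans hRr'
    rw [Metric.mem_eball, edist_zero_right, enorm_eq_nnnorm]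
    exact (ENNReal.coe_le_coe.mpr hz').trans_lt hr'r
  refine HasSum.sigma_of_hasSum (by simpa only [zero_add] using hP.hasSum hzr) (fun n ↦ ?_) ?_
  · rw [multilinear_const_eq_sum]
    exact hasSum_fintype _
  · refine hsum.of_norm_bounded fun x ↦ ?_
    rw [norm_smul, mul_comm, norm_prod]
    gcongr
    calc ∏ k, ‖z (x.2 k)‖ ≤ ∏ _k : Fin x.1, R :=
          Finset.prod_le_prod (fun _ _ ↦ norm_nonneg _) fun k _ ↦ hz _
      _ = R ^ x.1 := by simp only [Finset.prod_const, Finset.card_univ, Fintype.card_fin]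

/-- The exponent of the variable `i` in the commutative monomial spelled by a word. -/
def wordExponent {ι : Type*} [DecidableEq ι] (i : ι) (x : Σ n, Fin n → ι) : ℕ :=
  (Finset.univ.filter fun k ↦ x.2 k = i).card

lemma prod_word_eq {ι : Type*} [Fintype ι] [DecidableEq ι] (x : Σ n, Fin n → ι) (z : ι → ℝ) :
    ∏ k, z (x.2 k) = ∏ i, z i ^ wordExponent i x := by
  rw [← Finset.prod_fiberwise' Finset.univ x.2 z]
  simp only [Finset.prod_const, wordExponent]

lemma sum_wordExponent {ι : Type*} [Fintype ι] [DecidableEq ι] (x : Σ n, Fin n → ι) :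
    ∑ i, wordExponent i x = x.1 := by
  simp only [wordExponent]
  rw [← Finset.card_eq_sum_card_fiberwise (fun _ _ ↦ Finset.mem_coe.mpr (Finset.mem_univ _)),
    Finset.card_univ, Fintype.card_fin]

/-- The index set is that of the words containing the letter `0`: these are the monomials that
survive when the values at `t = 0` are subtracted. -/
lemma exists_hasSum_sub_of_analyticAt [CompleteSpace E] {U : (Fin 3 → ℝ) → E}
    (hU : AnalyticAt ℝ U 0) :
    ∃ R > 0, ∃ (ι : Type) (_ : Countable ι) (c : ι → E) (p q l : ι → ℕ), (∀ n, p n ≠ 0) ∧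
      (Summable fun n ↦ ‖c n‖ * R ^ (p n + q n + l n)) ∧
      ∀ t a h, |t| ≤ R → |a| ≤ R → |h| ≤ R →
        HasSum (fun n ↦ (t ^ p n * a ^ q n * h ^ l n) • c n) (U ![t, a, h] - U ![0, a, h]) := by
  obtain ⟨R, hR, c, hsum, hU⟩ := exists_hasSum_words_of_analyticAt hU
  refine ⟨R, hR, {x : Σ n, Fin n → Fin 3 // wordExponent 0 x ≠ 0}, inferInstance, fun x ↦ c x,
    fun x ↦ wordExponent 0 x.1, fun x ↦ wordExponent 1 x.1, fun x ↦ wordExponent 2 x.1,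
    fun x ↦ x.2, ?_, fun t a h ht ha hh ↦ ?_⟩
  · refine (hsum.subtype _).congr fun x ↦ ?_
    rw [← Fin.sum_univ_three fun i ↦ wordExponent i x.1, sum_wordExponent]
    rfl
  · have hdiff := (hU ![t, a, h] (by simp [Fin.forall_fin_succ, ht, ha, hh])).sub
      (hU ![0, a, h] (by simp [Fin.forall_fin_succ, hR.le, ha, hh]))
    simp only [prod_word_eq, Fin.prod_univ_three, ← sub_smul] at hdiff
    have hwords := (hasSum_subtype_iff_of_support_subset
      (s := {x : Σ n, Fin n → Fin 3 | wordExponent 0 x ≠ 0}) ?_).mpr hdiff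
    · refine hwords.congr_fun fun x ↦ ?_
      have hx : wordExponent 0 x.1 ≠ 0 := x.2
      simp [hx]
    · intro x hx hx₀
      exact hx (by simp [hx₀])

end Expansion

section LocalUniqueness

variable {V : Type*} [NormedAddCommGroup V] {κ : ℝ} {g : ℝ × ℝ → V}

lemma exists_bounds_of_alongTangent_ne_zero (hκ : 0 < κ)
    (hsupp : ∀ z, g z ≠ 0 → z.1 ^ 2 ≤ κ * z.2) {R : ℝ} (hR : 0 < R) :
    ∃ δ > 0, ∀ h ≤ δ, ∀ X a, alongTangent κ g h X a ≠ 0 →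
      |X| < 1 ∧ |X - κ * a| ≤ R ∧ |a| ≤ R := by
  set ρ : ℝ := min 2⁻¹ (R / (1 + κ))
  have hρpos : 0 < ρ := by positivity
  have hρR : (1 + κ) * ρ ≤ R := by
    rw [mul_comm, ← le_div_iff₀ (by positivity)]
    exact min_le_right _ _
  refine ⟨min (ρ ^ 2 / (2 * κ)) (κ * ρ ^ 2 / 4), by positivity, fun h hh X a hne ↦ ?_⟩
  obtain ⟨hX, ha⟩ := bounds_of_alongTangent_ne_zero hκ hsupp hne
  have hXρ : |X| ≤ ρ := by
    refine abs_le_of_sq_le_sq (hX.trans ?_) hρpos.le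
    rw [mul_comm, ← le_div_iff₀ (by positivity)]
    exact hh.trans (min_le_left _ _)
  have haρ : |a| ≤ ρ := by
    refine abs_le_of_sq_le_sq (le_of_mul_le_mul_left (ha.trans ?_) hκ) hρpos.le
    linarith [hh.trans (min_le_right _ _)]
  refine ⟨(hXρ.trans (min_le_left _ _)).trans_lt (by norm_num), ?_, haρ.trans (by nlinarith)⟩
  calc |X - κ * a| ≤ |X| + κ * |a| := by
        simpa only [abs_mul, abs_of_pos hκ] using abs_sub X (κ * a)
    _ ≤ ρ + κ * ρ := by gcongr
    _ ≤ R := by linarith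

lemma eventually_eq_zero_of_alongTangent_eq_zero (hκ : 0 < κ)
    (hsupp : ∀ z, g z ≠ 0 → z.1 ^ 2 ≤ κ * z.2) {δ : ℝ} (hδ : 0 < δ)
    (hzero : ∀ h ∈ Icc 0 δ, ∀ X ∈ Icc (-1 : ℝ) 1, ∀ a ∈ Icc (-1 : ℝ) 1,
      alongTangent κ g h X a = 0) :
    ∀ᶠ z in 𝓝 (0 : ℝ × ℝ), g z = 0 := by
  have hX : ∀ᶠ z in 𝓝 (0 : ℝ × ℝ), |z.1| < 1 :=
    (by fun_prop : Continuous fun z : ℝ × ℝ ↦ |z.1|).continuousAt.eventually_lt_const (by simp)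
  have ha : ∀ᶠ z in 𝓝 (0 : ℝ × ℝ), |z.1 / κ| < 1 :=
    (by fun_prop : Continuous fun z : ℝ × ℝ ↦ |z.1 / κ|).continuousAt.eventually_lt_const
      (by simp)
  have hY : ∀ᶠ z in 𝓝 (0 : ℝ × ℝ), z.2 < δ := continuous_snd.continuousAt.eventually_lt_const hδ
  filter_upwards [hX, ha, hY] with z hX ha hY
  by_contra hne
  have hregion := hsupp z hne
  have htangent : alongTangent κ g (z.2 - z.1 ^ 2 / (2 * κ)) z.1 (z.1 / κ) = g z := by
    unfold alongTangent
    congr 1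
    refine Prod.ext rfl ?_
    dsimp only
    field
  refine hne (htangent ▸ hzero _ ⟨?_, ?_⟩ _ (abs_le.mp hX.le) _ (abs_le.mp ha.le))
  · rw [sub_nonneg, div_le_iff₀ (by positivity)]
    nlinarith [sq_nonneg z.1]
  · linarith [show 0 ≤ z.1 ^ 2 / (2 * κ) by positivity]

variable [NormedSpace ℝ V] [CompleteSpace V]

lemma isHierarchy_moment {ι : Type*} [Countable ι] {c : ι → V →L[ℝ] V} {p q l : ι → ℕ}
    {δ R : ℝ} {U : (Fin 3 → ℝ) → V →L[ℝ] V} (hκ : 0 < κ) (hg : Continuous g)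
    (hsupp : ∀ z, g z ≠ 0 → z.1 ^ 2 ≤ κ * z.2) (hδκ : 4 * δ < κ) (hδR : δ ≤ R) (hR : 0 ≤ R)
    (hbounds : ∀ h ≤ δ, ∀ X a, alongTangent κ g h X a ≠ 0 →
      |X| < 1 ∧ |X - κ * a| ≤ R ∧ |a| ≤ R)
    (hsum : Summable fun n ↦ ‖c n‖ * R ^ (p n + q n + l n)) (hUcont : Continuous U)
    (hU : ∀ t a h, |t| ≤ R → |a| ≤ R → |h| ≤ R →
      HasSum (fun n ↦ (t ^ p n * a ^ q n * h ^ l n) • c n) (U ![t, a, h] - 1))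
    (hray : ∀ a h, ∫ X, U ![X - κ * a, a, h] (alongTangent κ g h X a) = 0) :
    IsHierarchy κ δ (fun n ↦ ‖c n‖ * R ^ l n) p q (moment κ g) where
  succ h hh i j := moment_succ hκ hg hsupp hh.1 (by linarith [hh.2]) i j
  zero h hh j := by
    refine norm_moment_zero_le (c := fun n ↦ h ^ l n • c n) (U := fun t a ↦ U ![t, a, h]) hg hR
      (fun X a hne ↦ (hbounds h hh.2 X a hne).2) (fun n ↦ ?_) (hsum.congr fun n ↦ by ring)
      (fun t a ht ha ↦ ?_) ?_ (fun a ↦ ?_) j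
    · rw [norm_smul, norm_pow, Real.norm_of_nonneg hh.1, mul_comm]
      gcongr
      · exact hh.1
      · exact hh.2.trans hδR
    · refine (hU t a h ht ha ?_).congr_fun fun n ↦ by rw [smul_smul]
      rw [abs_of_nonneg hh.1]
      exact hh.2.trans hδR
    · fun_prop
    · rw [intervalIntegral.integral_eq_integral_of_support_subset, hray]
      intro X hX
      have hne : alongTangent κ g h X a ≠ 0 := fun hφ ↦ hX (by simp [hφ])
      exact Ioo_subset_Ioc_self (abs_lt.mp (hbounds h hh.2 X a hne).1)

theorem eventually_eq_zero_of_integral_alongTangent_eq_zero_of_normalized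
    (hκ : 0 < κ) (hg : Continuous g) (hsupp : ∀ z, g z ≠ 0 → z.1 ^ 2 ≤ κ * z.2)
    {U : (Fin 3 → ℝ) → V →L[ℝ] V} (hU : AnalyticAt ℝ U 0) (hUcont : Continuous U)
    (hU₀ : ∀ a h, U ![0, a, h] = 1)
    (hray : ∀ a h, ∫ X, U ![X - κ * a, a, h] (alongTangent κ g h X a) = 0) :
    ∀ᶠ z in 𝓝 (0 : ℝ × ℝ), g z = 0 := by
  obtain ⟨R, hR, ι, _, c, p, q, l, hp, hsum, hseries⟩ := exists_hasSum_sub_of_analyticAt hU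
  simp only [hU₀] at hseries
  obtain ⟨δ₀, hδ₀, hbounds⟩ := exists_bounds_of_alongTangent_ne_zero hκ hsupp (half_pos hR)
  set δ : ℝ := min δ₀ (min R (κ / 8))
  have hδ : 0 < δ := by positivity
  have hδδ₀ : δ ≤ δ₀ := min_le_left _ _
  have hδR : δ ≤ R := (min_le_right _ _).trans (min_le_left _ _)
  have hδκ : δ ≤ κ / 8 := (min_le_right _ _).trans (min_le_right _ _)
  have hRR : R / 2 ≤ R := half_le_self hR.le
  have hm : IsHierarchy κ δ (fun n ↦ ‖c n‖ * R ^ l n) p q (moment κ g) :=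
    isHierarchy_moment hκ hg hsupp (by linarith) hδR hR.le
      (fun h hh X a hne ↦ (hbounds h (hh.trans hδδ₀) X a hne).imp_right
        (And.imp (·.trans hRR) (·.trans hRR))) hsum hUcont hseries hray
  obtain ⟨M, hM⟩ := (isCompact_Icc.prod isCompact_Icc).exists_bound_of_continuousOn
    (s := Icc 0 δ ×ˢ Icc (-1 : ℝ × ℝ) 1) (by fun_prop : Continuous fun w : ℝ × ℝ × ℝ ↦
      alongTangent κ g w.1 w.2.1 w.2.2).continuousOn
  have hgrowth (h : ℝ) (hh : h ∈ Icc 0 δ) :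
      HasGrowth (M * volume.real (Icc (-1 : ℝ × ℝ) 1)) (R / 2) (moment κ g h) :=
    hasGrowth_moment (half_pos hR).le (fun z hz ↦ hM (h, z) ⟨hh, hz⟩)
      fun X a hne ↦ (hbounds h (hh.2.trans hδδ₀) X a hne).2
  obtain ⟨δ', hδ', hmoment⟩ := hm.exists_forall_eq_zero hκ.le hδ (half_pos hR) (half_lt_self hR)
    (fun n ↦ by positivity) hp (hsum.congr fun n ↦ by ring) hgrowth
  exact eventually_eq_zero_of_alongTangent_eq_zero hκ hsupp hδ' fun h hh X hX a ha ↦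
    alongTangent_eq_zero_of_moment_eq_zero hg (hmoment h hh) hX ha

/-- Multiplying the ray identities by `(A ![0, a, h])⁻¹` normalizes the weight to be the identity at
the point of tangency. -/
theorem eventually_eq_zero_of_integral_alongTangent_eq_zero
    (hκ : 0 < κ) (hg : Continuous g) (hsupp : ∀ z, g z ≠ 0 → z.1 ^ 2 ≤ κ * z.2)
    {A : (Fin 3 → ℝ) → V →L[ℝ] V} (hA : AnalyticOnNhd ℝ A univ)
    (hunit : ∀ a h, IsUnit (A ![0, a, h]))
    (hray : ∀ a h, ∫ X, A ![X - κ * a, a, h] (alongTangent κ g h X a) = 0) :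
    ∀ᶠ z in 𝓝 (0 : ℝ × ℝ), g z = 0 := by
  have hA₀ : AnalyticOnNhd ℝ (fun z : Fin 3 → ℝ ↦ A ![0, z 1, z 2]) univ := by
    have hpi : ContDiff ℝ ω fun z : Fin 3 → ℝ ↦ (![0, z 1, z 2] : Fin 3 → ℝ) :=
      contDiff_pi.mpr fun i ↦ by fin_cases i <;> dsimp <;> fun_prop
    exact fun z _ ↦ AnalyticAt.fun_comp (hA _ trivial) hpi.contDiffAt.analyticAt
  have hU : AnalyticOnNhd ℝ (fun z ↦ Ring.inverse (A ![0, z 1, z 2]) * A z) univ := by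
    refine AnalyticOnNhd.mul (fun z _ ↦ ?_) hA
    obtain ⟨u, hu⟩ := hunit (z 1) (z 2)
    exact AnalyticAt.fun_comp (f := fun z : Fin 3 → ℝ ↦ A ![0, z 1, z 2])
      (hu ▸ analyticAt_inverse u) (hA₀ z trivial)
  refine eventually_eq_zero_of_integral_alongTangent_eq_zero_of_normalized hκ hg hsupp
    (hU 0 trivial) hU.continuous (fun a h ↦ Ring.inverse_mul_cancel _ (hunit a h)) fun a h ↦ ?_
  obtain ⟨u, hu⟩ := hunit a h
  have hcomm := (ContinuousLinearEquiv.unitsEquiv ℝ V u⁻¹).integral_comp_comm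
    (μ := volume) fun X ↦ A ![X - κ * a, a, h] (alongTangent κ g h X a)
  rw [hray, map_zero] at hcomm
  rw [← hcomm]
  congr 1 with X
  change (Ring.inverse (A ![0, a, h]) * A _) _ = (↑u⁻¹ : V →L[ℝ] V) _
  rw [← hu, Ring.inverse_unit]
  rfl

end LocalUniqueness

section Transform

variable {E V : Type*} [NormedAddCommGroup E] [InnerProductSpace ℝ E] [NormedAddCommGroup V]
  [NormedSpace ℝ V]

/-- The X-ray transform of `f` with weight `W`, on the line with foot point `p` and direction `v`.
The weight may depend on the line as well as on the point of the line. -/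
noncomputable def transform (W : E × E × E → V →L[ℝ] V) (f : E → V) (p v : E) : V :=
  ∫ t : ℝ, W (p, v, p + t • v) (f (p + t • v))

/-- A weight is an analytic weight if it is real-analytic and invertible at every `(p, v, x)` for
which `x` lies on the line with foot point `p` and unit direction `v`. -/
structure IsAnalyticWeight (W : E × E × E → V →L[ℝ] V) : Prop where
  analyticAt (p v : E) (t : ℝ) : ‖v‖ = 1 → ⟪p, v⟫ = 0 → AnalyticAt ℝ W (p, v, p + t • v)
  isUnit (p v : E) (t : ℝ) : ‖v‖ = 1 → ⟪p, v⟫ = 0 → IsUnit (W (p, v, p + t • v))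

/-- The orthogonal projection of the origin to the line through `b` with unit direction `v`. -/
noncomputable def foot (b v : E) : E :=
  b - ⟪b, v⟫ • v

lemma inner_foot_eq_zero {b v : E} (hv : ‖v‖ = 1) : ⟪foot b v, v⟫ = 0 := by
  rw [foot, inner_sub_left, real_inner_smul_left, real_inner_self_eq_norm_sq, hv, one_pow, mul_one,
    sub_self]

/-- The weight of the point `b + X • w` on the line through `b` directed by `w ≠ 0`, which is not
required to have norm one. -/
noncomputable def weightAlong (W : E × E × E → V →L[ℝ] V) (b w : E) (X : ℝ) : V →L[ℝ] V :=
  W (foot b (NormedSpace.normalize w), NormedSpace.normalize w, b + X • w)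

variable {W : E × E × E → V →L[ℝ] V} {f : E → V} {b w : E}

lemma add_smul_eq_foot_add_smul (b w : E) (X : ℝ) :
    b + X • w = foot b (NormedSpace.normalize w) +
      (‖w‖ * X + ⟪b, NormedSpace.normalize w⟫) • NormedSpace.normalize w := by
  rw [foot, add_smul, mul_comm, mul_smul, NormedSpace.norm_smul_normalize]
  abel

lemma integral_weightAlong_eq_zero (hw : w ≠ 0)
    (hf : ∀ v, ‖v‖ = 1 → ∀ p, ⟪p, v⟫ = 0 → transform W f p v = 0) :
    ∫ X, weightAlong W b w X (f (b + X • w)) = 0 := by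
  set v := NormedSpace.normalize w with hv
  have hv₁ : ‖v‖ = 1 := NormedSpace.norm_normalize hw
  set F : ℝ → V := fun t ↦ W (foot b v, v, foot b v + t • v) (f (foot b v + t • v)) with hF
  calc ∫ X, weightAlong W b w X (f (b + X • w)) = ∫ X, F (‖w‖ * X + ⟪b, v⟫) := by
        simp only [weightAlong, hF, hv, ← add_smul_eq_foot_add_smul]
    _ = |‖w‖⁻¹| • ∫ t, F t := by
        rw [Measure.integral_comp_mul_left (fun t ↦ F (t + ⟪b, v⟫)) ‖w‖,
          integral_add_right_eq_self F]
    _ = 0 := by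
        rw [show ∫ t, F t = 0 from hf v hv₁ _ (inner_foot_eq_zero hv₁), smul_zero]

namespace IsAnalyticWeight

lemma isUnit_weightAlong (hW : IsAnalyticWeight W) (hw : w ≠ 0) (X : ℝ) :
    IsUnit (weightAlong W b w X) := by
  have hv := NormedSpace.norm_normalize hw
  rw [weightAlong, add_smul_eq_foot_add_smul]
  exact hW.isUnit _ _ _ hv (inner_foot_eq_zero hv)

lemma analyticAt_weightAlong (hW : IsAnalyticWeight W) {T : Type*} [NormedAddCommGroup T]
    [NormedSpace ℝ T] {b w : T → E} {X : T → ℝ} (hb : ContDiff ℝ ω b) (hw : ContDiff ℝ ω w)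
    (hX : ContDiff ℝ ω X) {z : T} (hwz : w z ≠ 0) :
    AnalyticAt ℝ (fun z ↦ weightAlong W (b z) (w z) (X z)) z := by
  have hv := NormedSpace.norm_normalize hwz
  have hdir : ContDiffAt ℝ ω (fun z ↦ NormedSpace.normalize (w z)) z :=
    ((hw.contDiffAt.norm ℝ hwz).inv (norm_ne_zero_iff.mpr hwz)).smul hw.contDiffAt
  have hfoot : ContDiffAt ℝ ω (fun z ↦ foot (b z) (NormedSpace.normalize (w z))) z :=
    hb.contDiffAt.sub ((hb.contDiffAt.inner ℝ hdir).smul hdir)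
  have hline : ContDiffAt ℝ ω (fun z ↦ b z + X z • w z) z := by fun_prop
  refine AnalyticAt.fun_comp (g := W) ?_ (hfoot.prodMk (hdir.prodMk hline)).analyticAt
  rw [add_smul_eq_foot_add_smul]
  exact hW.analyticAt _ _ _ hv (inner_foot_eq_zero hv)

lemma comp_linearIsometry (hW : IsAnalyticWeight W) {F : Type*} [NormedAddCommGroup F]
    [InnerProductSpace ℝ F] (L : F →ₗᵢ[ℝ] E) :
    IsAnalyticWeight fun y : F × F × F ↦ W (L y.1, L y.2.1, L y.2.2) where
  analyticAt p v t hv hpv := by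
    have hcomp : AnalyticAt ℝ (fun y : F × F × F ↦ (L y.1, L y.2.1, L y.2.2)) (p, v, p + t • v) :=
      (L.toContinuousLinearMap.prodMap
        (L.toContinuousLinearMap.prodMap L.toContinuousLinearMap)).analyticAt _
    refine AnalyticAt.fun_comp (g := W) ?_ hcomp
    simpa only [map_add, map_smul] using
      hW.analyticAt (L p) (L v) t (by rwa [L.norm_map]) (by rwa [L.inner_map_map])
  isUnit p v t hv hpv := by
    simpa only [map_add, map_smul] using
      hW.isUnit (L p) (L v) t (by rwa [L.norm_map]) (by rwa [L.inner_map_map])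

end IsAnalyticWeight

variable [CompleteSpace V]

/-- In the coordinates `(X, Y) ↦ (r - Y) • e + X • n` centred at `r • e`, the ball of radius `r`
lies above the parabola `X ^ 2 = 2 * r * Y`. -/
lemma IsAnalyticWeight.eventually_eq_zero_near_sphere (hW : IsAnalyticWeight W) (hf : Continuous f)
    {r : ℝ} (hr : 0 < r) (hsupp : ∀ x, f x ≠ 0 → ‖x‖ ≤ r)
    (hzero : ∀ v, ‖v‖ = 1 → ∀ p, ⟪p, v⟫ = 0 → transform W f p v = 0)
    {e n : E} (he : ‖e‖ = 1) (hn : ‖n‖ = 1) (hen : ⟪e, n⟫ = 0) :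
    ∀ᶠ z in 𝓝 (0 : ℝ × ℝ), f ((r - z.2) • e + z.1 • n) = 0 := by
  have hsq (s t : ℝ) : ‖s • e + t • n‖ ^ 2 = s ^ 2 + t ^ 2 := by
    rw [norm_add_sq_real, inner_smul_left, inner_smul_right, hen, norm_smul, norm_smul, he, hn]
    simp
  set base : ℝ → ℝ → E := fun a h ↦ (r - h + r * a ^ 2) • e
  set slope : ℝ → E := fun a ↦ n - a • e
  have hslope (a : ℝ) : slope a ≠ 0 := by
    intro h
    have hnorm := hsq (-a) 1
    rw [one_smul, neg_smul, neg_add_eq_sub, show n - a • e = 0 from h, norm_zero] at hnorm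
    nlinarith
  set A : (Fin 3 → ℝ) → V →L[ℝ] V :=
    fun z ↦ weightAlong W (base (z 1) (z 2)) (slope (z 1)) (z 0 + 2 * r * z 1)
  refine eventually_eq_zero_of_integral_alongTangent_eq_zero (κ := 2 * r) (by positivity)
    (hf.comp (by fun_prop)) (fun z hz ↦ ?_) (A := A) (fun z _ ↦ ?_) (fun a h ↦ ?_) fun a h ↦ ?_
  · have hle := pow_le_pow_left₀ (norm_nonneg _) (hsupp _ hz) 2
    rw [hsq] at hle
    nlinarith [sq_nonneg z.2]
  · exact hW.analyticAt_weightAlong (by fun_prop) (by fun_prop) (by fun_prop) (hslope _)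
  · exact hW.isUnit_weightAlong (hslope _) _
  · rw [← integral_weightAlong_eq_zero (hslope a) hzero (b := base a h)]
    congr 1 with X
    have hpoint : (r - (h - 2 * r * a ^ 2 / 2 + a * X)) • e + X • n = base a h + X • slope a := by
      simp only [base, slope]
      module
    simp [A, alongTangent, hpoint]

theorem IsAnalyticWeight.eq_zero_of_transform_eq_zero_of_finrank_eq_two
    (hW : IsAnalyticWeight W) (hE : Module.finrank ℝ E = 2) (hf : Continuous f)
    (hsupp : Bornology.IsBounded (Function.support f))
    (hzero : ∀ v, ‖v‖ = 1 → ∀ p, ⟪p, v⟫ = 0 → transform W f p v = 0) : f = 0 := by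
  have : FiniteDimensional ℝ E := .of_finrank_pos (by omega)
  have : Nontrivial E := Module.nontrivial_of_finrank_pos (R := ℝ) (by omega)
  by_contra hne
  have hcompact : IsCompact (tsupport f) :=
    Metric.isCompact_of_isClosed_isBounded (isClosed_tsupport f) hsupp.closure
  obtain ⟨x₀, hx₀, hmax⟩ := hcompact.exists_isMaxOn
    (nonempty_iff_ne_empty.mpr (tsupport_eq_empty_iff.not.mpr hne)) continuous_norm.continuousOn
  have hball (x : E) (hx : f x ≠ 0) : ‖x‖ ≤ ‖x₀‖ := hmax (subset_tsupport f hx)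
  have hx₀ne : x₀ ≠ 0 := by
    intro h
    refine hne (hf.ext_on (dense_compl_singleton 0) continuous_const fun x hx ↦ ?_)
    by_contra hfx
    exact hx (norm_le_zero_iff.mp (by simpa only [h, norm_zero] using hball x hfx))
  set e := NormedSpace.normalize x₀ with he
  have he₁ : ‖e‖ = 1 := NormedSpace.norm_normalize hx₀ne
  obtain ⟨B, hB⟩ := Orthonormal.exists_orthonormalBasis_extension_of_card_eq (ι := Fin 2)
    (v := fun _ ↦ e) (s := {0}) (by simpa using hE) ⟨fun _ ↦ he₁, fun i j hij ↦
      (hij (Subsingleton.elim i j)).elim⟩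
  have hB₀ : B 0 = e := hB 0 rfl
  have hlocal := hW.eventually_eq_zero_near_sphere hf (norm_pos_iff.mpr hx₀ne) hball hzero
    (B.norm_eq_one 0) (B.norm_eq_one 1) (B.inner_eq_zero zero_ne_one)
  have hcoord : Tendsto (fun y ↦ (⟪B 1, y⟫, ‖x₀‖ - ⟪B 0, y⟫)) (𝓝 x₀) (𝓝 (0 : ℝ × ℝ)) := by
    refine Continuous.tendsto' (by fun_prop) _ _ ?_
    rw [← NormedSpace.norm_smul_normalize x₀, ← he, ← hB₀]
    simp [inner_smul_right, norm_smul]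
  refine notMem_tsupport_iff_eventuallyEq.mpr ?_ hx₀
  filter_upwards [hcoord.eventually hlocal] with y hy
  simpa only [sub_sub_cancel, ← Fin.sum_univ_two fun i ↦ ⟪B i, y⟫ • B i, B.sum_repr',
    Pi.zero_apply] using hy

end Transform

section Matrix

variable {n : Type*} [Fintype n]

/-- A complex matrix acting on vectors, as a real-linear map. -/
noncomputable def mulVecCLM : Matrix n n ℂ →L[ℝ] (n → ℂ) →L[ℝ] (n → ℂ) :=
  (Matrix.mulVecBilin ℝ ℝ).toContinuousBilinearMap

lemma mulVecCLM_apply (A : Matrix n n ℂ) (x : n → ℂ) : mulVecCLM A x = A *ᵥ x :=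
  rfl

lemma isUnit_mulVecCLM [DecidableEq n] {A : Matrix n n ℂ} (hA : IsUnit A) :
    IsUnit (mulVecCLM A) := by
  obtain ⟨B, hAB, hBA⟩ := isUnit_iff_exists.mp hA
  refine isUnit_iff_exists.mpr ⟨mulVecCLM B, ?_, ?_⟩ <;> ext1 x <;>
    simp [mulVecCLM_apply, hAB, hBA]

end Matrix

end XRay

theorem matrix_weighted_xray_injective_disk_general {E V : Type*} [NormedAddCommGroup E]
    [InnerProductSpace ℝ E] [NormedAddCommGroup V] [NormedSpace ℝ V] [CompleteSpace V]
    (hE : 1 < Module.rank ℝ E) {W : E × E × E → V →L[ℝ] V} (hW : XRay.IsAnalyticWeight W)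
    {f : E → V} (hf : Continuous f) (hsupp : Bornology.IsBounded (Function.support f))
    (hzero : ∀ v, ‖v‖ = 1 → ∀ p, ⟪p, v⟫ = 0 → XRay.transform W f p v = 0) : f = 0 := by
  have : Nontrivial E := rank_pos_iff_nontrivial.mp (zero_lt_one.trans hE)
  refine hf.ext_on (dense_compl_singleton 0) continuous_const fun x (hx : x ≠ 0) ↦ ?_
  obtain ⟨y, hxy⟩ := exists_linearIndependent_pair_of_one_lt_rank hE hx
  set P : Submodule ℝ E := Submodule.span ℝ (Set.range ![x, y])
  have hP : Module.finrank ℝ P = 2 := by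
    simpa only [Fintype.card_fin] using finrank_span_eq_card hxy
  have hxP : x ∈ P := Submodule.subset_span ⟨0, rfl⟩
  have hrestrict : f ∘ P.subtypeₗᵢ = 0 :=
    (hW.comp_linearIsometry P.subtypeₗᵢ).eq_zero_of_transform_eq_zero_of_finrank_eq_two hP
      (hf.comp P.subtypeₗᵢ.continuous) (P.subtypeₗᵢ.antilipschitz.isBounded_preimage hsupp)
      fun v hv p hpv ↦ hzero v hv p hpv
  exact congrFun hrestrict ⟨x, hxP⟩

/-- Injectivity of the matrix-weighted X-ray transform on the closed unit disk in ℝ²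
with a real-analytic `GL(N, ℂ)`-valued weight: if all weighted line integrals of a
continuous `ℂ^N`-valued function supported in the closed unit disk vanish, then the
function vanishes identically. -/
theorem matrix_weighted_xray_injective_disk
    (N : ℕ) (hN : 1 ≤ N)
    (W : EuclideanSpace ℝ (Fin 2) × EuclideanSpace ℝ (Fin 2) × EuclideanSpace ℝ (Fin 2) →
      Matrix (Fin N) (Fin N) ℂ)
    (hWanalytic : AnalyticOnNhd ℝ W Set.univ)
    (hWinv : ∀ (p : EuclideanSpace ℝ (Fin 2)) (v : EuclideanSpace ℝ (Fin 2))
      (x : EuclideanSpace ℝ (Fin 2)), ‖v‖ = 1 → IsUnit (W (p, v, x)))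
    (f : EuclideanSpace ℝ (Fin 2) → (Fin N → ℂ))
    (hf : Continuous f)
    (hsupp : Function.support f ⊆ Metric.closedBall (0 : EuclideanSpace ℝ (Fin 2)) 1)
    (hint : ∀ v : EuclideanSpace ℝ (Fin 2), ‖v‖ = 1 →
      ∀ p : EuclideanSpace ℝ (Fin 2), ⟪p, v⟫ = 0 →
        (∫ t : ℝ, W (p, v, p + t • v) *ᵥ f (p + t • v)) = 0) :
    f = 0 := by
  refine matrix_weighted_xray_injective_disk_general (W := fun y ↦ XRay.mulVecCLM (W y)) ?_
    ⟨fun p v t _ _ ↦ ?_, fun p v t hv _ ↦ XRay.isUnit_mulVecCLM (hWinv p v _ hv)⟩ hf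
    (Metric.isBounded_closedBall.subset hsupp) hint
  · rw [← Module.finrank_eq_rank, finrank_euclideanSpace_fin]
    norm_num
  · exact (XRay.mulVecCLM.analyticAt _).fun_comp (hWanalytic _ trivial)
end
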